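/- Eigenvalue asymptotics for Toeplitz matrices with unimodal trigonometric polynomial symbols (Bogoya–Grudsky–Maximenko): Let f be a real-valued trigonometric polynomial on the unit circle which is unimodal: there exists θ_0 ∈ (0, 2π) with (d/dθ)f(e^{iθ}) > 0 for 0 < θ < θ_0 and (d/dθ)f(e^{iθ}) < 0 for θ_0 < θ < 2π, and moreover (d²/dθ²)f(e^{iθ}) ≠ 0 at θ = 0 and at θ = θ_0. Set L = f(1) (the minimum) and M = f(e^{iθ_0}) (the maximum). For each λ ∈ (L, M) let θ_1(λ) ∈ (0, θ_0) and θ_2(λ) ∈ (θ_0, 2π) be the unique solutions of f(e^{iθ}) = λ, and set ψ(λ) = (θ_1(λ) − θ_2(λ))/2 + π; ψ extends to a homeomorphism from [L, M] onto [0, π] and is differentiable on (L, M). Let λ_1^{(n)} ≤ ⋯ ≤ λ_n^{(n)} be the (real) eigenvalues of the Hermitian Toeplitz matrix T_n(f) arranged in nondecreasing order. Then for every x ∈ (0, 1): (i) if k = k(n) satisfies k/n → x as n → ∞, then λ_k^{(n)} → λ_x, where λ_x ∈ (L, M) is determined by ψ(λ_x) = πx; and (ii) if |k/n − x| = O(1/n)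 as n → ∞, then λ_{k+1}^{(n)} − λ_k^{(n)} = π/(ψ′(λ_x)·(n+1)) + o(1/n). -/

import Mathlib

/-!
Write `L = f 0`, `M = f θ₀`. For a level `λ ∈ (L, M)` the function `f - λ` has exactly two simple
zeros `θ₁ = θ₁(λ)`, `θ₂ = θ₂(λ)` per period, so that, with `t = e^{iθ}` and `t_k = e^{iθ_k}`,
`f - λ = κ t⁻¹ (t - t₁) (t - t₂) b` for a unimodular constant `κ` and a *positive* trigonometric
polynomial `b = b_λ`, called the cofactor here (`Unimodal.cof`).

*The eigenvalue equation.* Identify vectors in `ℂⁿ` with polynomials `V` of degree `< n`. Then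
`T_n(f - λ) V = 0` says that the Fourier coefficients of index `1, …, n` of
`b (t - t₁) (t - t₂) V` vanish. Hence `T_{n+2}(b)` maps the polynomial `(t - t₁) (t - t₂) V`, of
degree `< n + 2`, to a combination of the first and the last basis vectors, and as `T_{n+2}(b)` is
injective, `(t - t₁) (t - t₂) V` is a combination of the first column `Y` of its inverse and of the
reversed conjugate of `Y`, which is the last column. Such a combination is divisible by
`(t - t₁) (t - t₂)` only if it vanishes at both points. This makes `λ` a simple eigenvalue, and it
is one precisely when `t₂^{n+1} conj R = t₁^{n+1} R`, where `R = Y(t₂) conj (Y(t₁))`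
(`InKer.dependent`, `exists_inKer_iff`).

*Uniform control of `R`.* For `λ` near a fixed level, all cofactors satisfy `μ ≤ b ≤ C` and the
coefficients of `b_λ` are Lipschitz in `λ`. Conjugating `T_{n+2}(b)` by the weights `ρ^j`, with
`ρ > 1` close to `1`, preserves coercivity, so the coefficients of `Y` decay exponentially and are
Lipschitz in `λ`, uniformly in `n` (`IsFirstCol.sum_weighted_le`,
`IsFirstCol.sum_weighted_sub_le`). Moreover `|Y|` is bounded below on the circle uniformly in `n`
(`IsFirstCol.lower_bound`). So `R` is bounded away from `0` and Lipschitz, uniformly in `n`, and has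
a uniformly Lipschitz argument `ω = ω_n`. Taking arguments, the eigenvalues near the given level are
simple and are the solutions of `H_n(λ) = (n + 1) ψ(λ) + ω_n(λ) ∈ π ℤ`
(`Unimodal.local_quantization`).

*Asymptotics.* By the intermediate value theorem, an interval `(a, b]` near the level contains at
least `n (ψ(b) - ψ(a)) / π - O(1)` eigenvalues, and the bound is additive, so it holds whenever
`L < a < b < M` (`LocallyQuantized.count_global`). Since `ψ` increases from `0` to `π`, letting
`b → M` bounds from above the number of eigenvalues below a level, and letting `a → L` bounds it
from below. This gives the first assertion (`LocallyQuantized.tendsto`). Both `λ_k` and `λ_{k+1}`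
then tend to `λ_x`, near which `H_n` is increasing for large `n`, so `H_n(λ_{k+1}) - H_n(λ_k) = π`.
Here the difference of `ω_n` tends to `0`, and strict differentiability of `ψ` at `λ_x` gives
`(n + 1) (λ_{k+1} - λ_k) → π / ψ'(λ_x)` (`LocallyQuantized.tendsto_gap`).
-/

open MeasureTheory Filter Topology

/-- The `ℓ`-th Fourier coefficient of a function `θ ↦ f(e^{iθ})` on the unit circle. -/
noncomputable def fourierCoeff' (f : ℝ → ℂ) (ℓ : ℤ) : ℂ :=
  ((2 * Real.pi : ℝ) : ℂ)⁻¹ *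
    ∫ θ in (-Real.pi)..Real.pi, Complex.exp (-Complex.I * (ℓ : ℂ) * (θ : ℂ)) * f θ

/-- The `n × n` Toeplitz matrix `T_n(f)`. -/
noncomputable def toeplitzMatrix (f : ℝ → ℂ) (n : ℕ) : Matrix (Fin n) (Fin n) ℂ :=
  Matrix.of fun j k : Fin n => fourierCoeff' f ((j : ℤ) - (k : ℤ))

/-! ### Means over the circle and Fourier coefficients -/

/-- The mean of a function over one period. -/
noncomputable def circMean (g : ℝ → ℂ) : ℂ :=
  ((2 * Real.pi : ℝ) : ℂ)⁻¹ * ∫ θ in (-Real.pi)..Real.pi, g θ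

/-- The mean of a real-valued function over one period. -/
noncomputable def circMeanR (g : ℝ → ℝ) : ℝ :=
  (2 * Real.pi)⁻¹ * ∫ θ in (-Real.pi)..Real.pi, g θ

/-- The value of a polynomial at `e^{iθ}`, as a function of `θ`. -/
noncomputable def evC (Y : Polynomial ℂ) (θ : ℝ) : ℂ := Y.eval (Complex.exp (Complex.I * θ))

/-- The trigonometric sum with coefficients `β l`, `|l| ≤ K`. -/
noncomputable def trigSum (K : ℕ) (β : ℤ → ℂ) (θ : ℝ) : ℂ :=
  ∑ l ∈ Finset.Icc (-(K : ℤ)) (K : ℤ), β l * Complex.exp (Complex.I * (l : ℂ) * (θ : ℂ))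

@[fun_prop]
lemma continuous_evC (Y : Polynomial ℂ) : Continuous (evC Y) := by
  unfold evC; fun_prop

@[fun_prop]
lemma continuous_trigSum (K : ℕ) (β : ℤ → ℂ) : Continuous (trigSum K β) := by
  unfold trigSum; fun_prop

lemma fourierCoeff'_eq (g : ℝ → ℂ) (l : ℤ) :
    fourierCoeff' g l = circMean (fun θ => Complex.exp (-Complex.I * l * θ) * g θ) := rfl

lemma circMean_add {g h : ℝ → ℂ} (hg : Continuous g) (hh : Continuous h) :
    circMean (fun θ => g θ + h θ) = circMean g + circMean h := by
  unfold circMean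
  rw [intervalIntegral.integral_add (hg.intervalIntegrable _ _) (hh.intervalIntegrable _ _), mul_add]

lemma circMean_const_mul (a : ℂ) (g : ℝ → ℂ) :
    circMean (fun θ => a * g θ) = a * circMean g := by
  unfold circMean
  rw [intervalIntegral.integral_const_mul]; ring

lemma circMean_sum {ι : Type*} (s : Finset ι) {g : ι → ℝ → ℂ} (hg : ∀ i ∈ s, Continuous (g i)) :
    circMean (fun θ => ∑ i ∈ s, g i θ) = ∑ i ∈ s, circMean (g i) := by
  unfold circMean
  rw [intervalIntegral.integral_finsetSum (fun i hi => (hg i hi).intervalIntegrable _ _),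
    Finset.mul_sum]

lemma circMean_conj (g : ℝ → ℂ) :
    circMean (fun θ => (starRingEnd ℂ) (g θ)) = (starRingEnd ℂ) (circMean g) := by
  unfold circMean
  rw [map_mul, map_inv₀, Complex.conj_ofReal]
  congr 1
  simp only [intervalIntegral.integral_of_le (neg_le_self Real.pi_pos.le)]
  exact integral_conj

lemma circMean_ofReal (g : ℝ → ℝ) : circMean (fun θ => (g θ : ℂ)) = (circMeanR g : ℂ) := by
  unfold circMean circMeanR
  rw [intervalIntegral.integral_ofReal]; push_cast; ring

lemma circMean_re {g : ℝ → ℂ} (hg : Continuous g) :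
    (circMean g).re = circMeanR (fun θ => (g θ).re) := by
  have h1 : circMean (fun θ => ((g θ).re : ℂ) + Complex.I * ((g θ).im : ℂ)) =
      (circMeanR (fun θ => (g θ).re) : ℂ) + Complex.I * (circMeanR (fun θ => (g θ).im) : ℂ) := by
    rw [circMean_add (by fun_prop) (by fun_prop), circMean_const_mul, circMean_ofReal,
      circMean_ofReal]
  have h2 : (fun θ => ((g θ).re : ℂ) + Complex.I * ((g θ).im : ℂ)) = g := by
    funext θ; rw [mul_comm]; exact Complex.re_add_im _
  rw [h2] at h1
  rw [h1]; simp

lemma circMeanR_mono {g h : ℝ → ℝ} (hg : Continuous g) (hh : Continuous h)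
    (H : ∀ θ, g θ ≤ h θ) : circMeanR g ≤ circMeanR h := by
  unfold circMeanR
  have := Real.pi_pos
  gcongr
  exact intervalIntegral.integral_mono (by linarith) (hg.intervalIntegrable _ _)
    (hh.intervalIntegrable _ _) H

lemma circMeanR_const_mul (a : ℝ) (g : ℝ → ℝ) :
    circMeanR (fun θ => a * g θ) = a * circMeanR g := by
  unfold circMeanR
  rw [intervalIntegral.integral_const_mul]; ring

lemma circMeanR_add {g h : ℝ → ℝ} (hg : Continuous g) (hh : Continuous h) :
    circMeanR (fun θ => g θ + h θ) = circMeanR g + circMeanR h := by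
  unfold circMeanR
  rw [intervalIntegral.integral_add (hg.intervalIntegrable _ _) (hh.intervalIntegrable _ _), mul_add]

lemma circMeanR_const (a : ℝ) : circMeanR (fun _ => a) = a := by
  unfold circMeanR
  have := Real.pi_pos
  rw [intervalIntegral.integral_const]; simp; field_simp; ring

lemma norm_circMean_le (g : ℝ → ℂ) : ‖circMean g‖ ≤ circMeanR (fun θ => ‖g θ‖) := by
  unfold circMean circMeanR
  have := Real.pi_pos
  rw [norm_mul, norm_inv, Complex.norm_real, Real.norm_of_nonneg (by positivity)]
  gcongr
  exact intervalIntegral.norm_integral_le_integral_norm (by linarith)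

lemma circMean_exp (l : ℤ) :
    circMean (fun θ => Complex.exp (Complex.I * l * θ)) = if l = 0 then 1 else 0 := by
  unfold circMean
  have hpi : (Real.pi : ℂ) ≠ 0 := by exact_mod_cast Real.pi_ne_zero
  split_ifs with h
  · subst h
    simp
    field_simp
    ring
  · have hl : (l : ℂ) ≠ 0 := by exact_mod_cast h
    rw [integral_exp_mul_complex (mul_ne_zero Complex.I_ne_zero hl)]
    have : Complex.exp (Complex.I * l * (Real.pi : ℝ)) =
        Complex.exp (Complex.I * l * ((-Real.pi : ℝ) : ℂ)) := by
      rw [Complex.exp_eq_exp_iff_exists_int]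
      exact ⟨l, by push_cast; ring⟩
    rw [this]; simp

lemma circMean_exp_mul_exp (j l : ℤ) :
    circMean (fun θ => Complex.exp (-Complex.I * j * θ) * Complex.exp (Complex.I * l * θ)) =
      if l = j then 1 else 0 := by
  have := circMean_exp (l - j)
  simp only [sub_eq_zero] at this
  rw [← this]
  congr 1; funext θ
  rw [← Complex.exp_add]; congr 1; push_cast; ring

lemma evC_eq_sum {Y : Polynomial ℂ} {m : ℕ} (hY : Y.degree < m) (θ : ℝ) :
    evC Y θ = ∑ k ∈ Finset.range m, Y.coeff k * Complex.exp (Complex.I * ((k : ℤ) : ℂ) * θ) := by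
  unfold evC
  rcases eq_or_ne Y 0 with rfl | h0
  · simp
  rw [Polynomial.eval_eq_sum_range' ((Polynomial.natDegree_lt_iff_degree_lt h0).2 hY)]
  refine Finset.sum_congr rfl fun k _ => ?_
  rw [← Complex.exp_nat_mul]; congr 2; push_cast; ring

/-- Pairing the Fourier coefficients of `g` with the coefficients of a polynomial. -/
lemma sum_fourierCoeff_mul_conj {g : ℝ → ℂ} (hg : Continuous g) {U : Polynomial ℂ} {m : ℕ}
    (hU : U.degree < m) :
    ∑ j ∈ Finset.range m, fourierCoeff' g j * (starRingEnd ℂ) (U.coeff j) =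
      circMean (fun θ => g θ * (starRingEnd ℂ) (evC U θ)) := by
  have : (fun θ => g θ * (starRingEnd ℂ) (evC U θ)) = fun θ : ℝ => ∑ j ∈ Finset.range m,
      (starRingEnd ℂ) (U.coeff j) * (Complex.exp (-Complex.I * ((j : ℤ) : ℂ) * θ) * g θ) := by
    funext θ
    rw [evC_eq_sum hU, map_sum, Finset.mul_sum]
    refine Finset.sum_congr rfl fun j _ => ?_
    rw [map_mul, ← Complex.exp_conj]
    simp only [map_mul, Complex.conj_I, Complex.conj_ofReal, map_intCast]
    ring
  rw [this, circMean_sum _ (fun i _ => by fun_prop)]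
  refine Finset.sum_congr rfl fun j _ => ?_
  rw [circMean_const_mul, fourierCoeff'_eq, mul_comm]

lemma fourierCoeff'_trigSum_mul {K : ℕ} {β : ℤ → ℂ} {Y : Polynomial ℂ} {m : ℕ}
    (hY : Y.degree < m) (j : ℤ) :
    fourierCoeff' (fun θ => trigSum K β θ * evC Y θ) j =
      ∑ l ∈ Finset.Icc (-(K : ℤ)) (K : ℤ), ∑ k ∈ Finset.range m,
        β l * Y.coeff k * if l + k = j then 1 else 0 := by
  rw [fourierCoeff'_eq]
  have : (fun θ : ℝ => Complex.exp (-Complex.I * j * θ) * (trigSum K β θ * evC Y θ)) = fun θ : ℝ =>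
      ∑ l ∈ Finset.Icc (-(K : ℤ)) (K : ℤ), ∑ k ∈ Finset.range m, (β l * Y.coeff k) *
      (Complex.exp (-Complex.I * j * θ) * Complex.exp (Complex.I * ((l + k : ℤ) : ℂ) * θ)) := by
    funext θ
    rw [evC_eq_sum hY, trigSum, Finset.sum_mul_sum, Finset.mul_sum]
    refine Finset.sum_congr rfl fun l _ => ?_
    rw [Finset.mul_sum]
    refine Finset.sum_congr rfl fun k _ => ?_
    have : Complex.exp (Complex.I * ((l + k : ℤ) : ℂ) * θ) =
      Complex.exp (Complex.I * l * θ) * Complex.exp (Complex.I * ((k : ℤ) : ℂ) * θ) := by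
      rw [← Complex.exp_add]; congr 1; push_cast; ring
    rw [this]; ring
  rw [this, circMean_sum _ (fun i _ => by fun_prop)]
  refine Finset.sum_congr rfl fun l _ => ?_
  rw [circMean_sum _ (fun i _ => by fun_prop)]
  refine Finset.sum_congr rfl fun k _ => ?_
  rw [circMean_const_mul, circMean_exp_mul_exp]

lemma fourierCoeff'_evC {Y : Polynomial ℂ} {m : ℕ} (hY : Y.degree < m) {j : ℕ} (hj : j < m) :
    fourierCoeff' (evC Y) j = Y.coeff j := by
  have h := fourierCoeff'_trigSum_mul (K := 0) (β := fun _ => 1) hY j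
  have h1 : (fun θ => trigSum 0 (fun _ => 1) θ * evC Y θ) = evC Y := by
    funext θ; simp [trigSum]
  rw [h1] at h
  rw [h]
  simp [hj]

/-- Parseval's identity for a polynomial. -/
lemma circMeanR_normSq_evC {Y : Polynomial ℂ} {m : ℕ} (hY : Y.degree < m) :
    circMeanR (fun θ => ‖evC Y θ‖ ^ 2) = ∑ j ∈ Finset.range m, ‖Y.coeff j‖ ^ 2 := by
  have h := sum_fourierCoeff_mul_conj (continuous_evC Y) hY
  have h1 : (fun θ => evC Y θ * (starRingEnd ℂ) (evC Y θ)) =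
      fun θ => ((‖evC Y θ‖ ^ 2 : ℝ) : ℂ) := by
    funext θ; rw [Complex.mul_conj']; push_cast; rfl
  rw [h1, circMean_ofReal] at h
  rw [← Complex.ofReal_inj, ← h]
  push_cast
  refine Finset.sum_congr rfl fun j hj => ?_
  rw [fourierCoeff'_evC hY (Finset.mem_range.1 hj), Complex.mul_conj']

/-! ### Sections of a positive trigonometric polynomial -/

/-- The polynomial whose `j`-th coefficient is `ρ ^ j` times that of `Y`. -/
noncomputable def weighted (ρ : ℝ) (Y : Polynomial ℂ) : Polynomial ℂ :=
  Y.comp (Polynomial.C (ρ : ℂ) * Polynomial.X)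

lemma weighted_coeff (ρ : ℝ) (Y : Polynomial ℂ) (j : ℕ) :
    (weighted ρ Y).coeff j = (ρ : ℂ) ^ j * Y.coeff j := by
  rw [weighted, Polynomial.comp_C_mul_X_coeff, mul_comm]

lemma weighted_degree {ρ : ℝ} {Y : Polynomial ℂ} {m : ℕ} (hY : Y.degree < m) :
    (weighted ρ Y).degree < m := by
  rw [Polynomial.degree_lt_iff_coeff_zero] at hY ⊢
  intro k hk
  rw [weighted_coeff, hY k hk, mul_zero]

/-- Conjugating a Toeplitz section by the weights `ρ ^ j` replaces the symbol `∑ β l t ^ l` by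
`∑ β l ρ ^ l t ^ l`. -/
lemma fourierCoeff'_weighted {K : ℕ} {β : ℤ → ℂ} {Y : Polynomial ℂ} {m : ℕ}
    (hY : Y.degree < m) {ρ : ℝ} (hρ : 0 < ρ) (j : ℕ) :
    fourierCoeff' (fun θ => trigSum K (fun l => (ρ : ℂ) ^ l * β l) θ * evC (weighted ρ Y) θ) j =
      (ρ : ℂ) ^ j * fourierCoeff' (fun θ => trigSum K β θ * evC Y θ) j := by
  have hρ' : (ρ : ℂ) ≠ 0 := by exact_mod_cast hρ.ne'
  rw [fourierCoeff'_trigSum_mul hY, fourierCoeff'_trigSum_mul (weighted_degree hY), Finset.mul_sum]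
  refine Finset.sum_congr rfl fun l _ => ?_
  rw [Finset.mul_sum]
  refine Finset.sum_congr rfl fun k _ => ?_
  split_ifs with h
  · have : (ρ : ℂ) ^ j = (ρ : ℂ) ^ l * (ρ : ℂ) ^ k := by
      rw [← zpow_natCast, ← zpow_natCast, ← zpow_add₀ hρ', h]
    rw [weighted_coeff, this]; ring
  · simp

lemma norm_trigSum_le (K : ℕ) (β : ℤ → ℂ) (θ : ℝ) :
    ‖trigSum K β θ‖ ≤ ∑ l ∈ Finset.Icc (-(K : ℤ)) (K : ℤ), ‖β l‖ := by
  unfold trigSum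
  refine (norm_sum_le _ _).trans (Finset.sum_le_sum fun l _ => ?_)
  rw [norm_mul]
  have : Complex.I * (l : ℂ) * (θ : ℂ) = ((l * θ : ℝ) : ℂ) * Complex.I := by push_cast; ring
  rw [this, Complex.norm_exp_ofReal_mul_I, mul_one]

lemma trigSum_sub (K : ℕ) (β γ : ℤ → ℂ) (θ : ℝ) :
    trigSum K β θ - trigSum K γ θ = trigSum K (fun l => β l - γ l) θ := by
  unfold trigSum
  rw [← Finset.sum_sub_distrib]
  exact Finset.sum_congr rfl fun l _ => by ring

/-- Coercivity of the section in the weighted norm. -/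
lemma weighted_coercive {K : ℕ} {β : ℤ → ℂ} {b : ℝ → ℝ} (hb : ∀ θ, (b θ : ℂ) = trigSum K β θ)
    {μ : ℝ} (hμ : ∀ θ, μ ≤ b θ) {ρ : ℝ} (hρ : 0 < ρ)
    (hβρ : ∑ l ∈ Finset.Icc (-(K : ℤ)) (K : ℤ), ‖(ρ : ℂ) ^ l * β l - β l‖ ≤ μ / 2)
    {Y : Polynomial ℂ} {m : ℕ} (hY : Y.degree < m) :
    μ / 2 * ∑ j ∈ Finset.range m, ‖(weighted ρ Y).coeff j‖ ^ 2 ≤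
      ‖∑ j ∈ Finset.range m, (ρ : ℂ) ^ j * fourierCoeff' (fun θ => trigSum K β θ * evC Y θ) j *
        (starRingEnd ℂ) ((weighted ρ Y).coeff j)‖ := by
  have hW := weighted_degree (ρ := ρ) hY
  have h1 := sum_fourierCoeff_mul_conj (g := fun θ => trigSum K (fun l => (ρ : ℂ) ^ l * β l) θ *
    evC (weighted ρ Y) θ) (by fun_prop) hW
  simp only [fourierCoeff'_weighted hY hρ] at h1
  rw [h1, ← circMeanR_normSq_evC hW, ← circMeanR_const_mul]
  refine le_trans ?_ (Complex.re_le_norm _)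
  rw [circMean_re (by fun_prop)]
  refine circMeanR_mono (by fun_prop) (by fun_prop) fun θ => ?_
  rw [mul_assoc, Complex.mul_conj', ← Complex.ofReal_pow, Complex.re_mul_ofReal]
  gcongr
  have h2 := trigSum_sub K (fun l => (ρ : ℂ) ^ l * β l) β θ
  have h3 := (norm_trigSum_le K (fun l => (ρ : ℂ) ^ l * β l - β l) θ).trans hβρ
  rw [← h2, ← hb] at h3
  have h4 := (abs_le.1 ((Complex.abs_re_le_norm _).trans h3)).1
  simp at h4
  linarith [hμ θ]

lemma norm_coeff_le_of_sum {Y : Polynomial ℂ} {m j : ℕ} (hY : Y.degree < m) {B : ℝ} (hB : 0 ≤ B)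
    (h : ∑ j ∈ Finset.range m, ‖Y.coeff j‖ ^ 2 ≤ B ^ 2) : ‖Y.coeff j‖ ≤ B := by
  by_cases hj : j < m
  · refine abs_le_of_sq_le_sq' (le_trans ?_ h) hB |>.2
    exact Finset.single_le_sum (f := fun j => ‖Y.coeff j‖ ^ 2) (fun _ _ => by positivity)
      (Finset.mem_range.2 hj)
  · rw [(Polynomial.degree_lt_iff_coeff_zero _ _).1 hY j (not_lt.1 hj)]; simpa

/-- `Y` is the first column of the inverse of the section of order `m` with symbol `b`. -/
def IsFirstCol (b : ℝ → ℂ) (m : ℕ) (Y : Polynomial ℂ) : Prop :=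
  Y.degree < m ∧ ∀ j < m, fourierCoeff' (fun θ => b θ * evC Y θ) j = if j = 0 then 1 else 0

/-- Exponential decay of the first column, in `ℓ²` form. -/
lemma IsFirstCol.sum_weighted_le {K : ℕ} {β : ℤ → ℂ} {b : ℝ → ℝ}
    (hb : ∀ θ, (b θ : ℂ) = trigSum K β θ)
    {μ : ℝ} (hμ0 : 0 < μ) (hμ : ∀ θ, μ ≤ b θ) {ρ : ℝ} (hρ : 0 < ρ)
    (hβρ : ∑ l ∈ Finset.Icc (-(K : ℤ)) (K : ℤ), ‖(ρ : ℂ) ^ l * β l - β l‖ ≤ μ / 2)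
    {Y : Polynomial ℂ} {m : ℕ} (hm : 0 < m) (hY : IsFirstCol (trigSum K β) m Y) :
    ∑ j ∈ Finset.range m, ‖(weighted ρ Y).coeff j‖ ^ 2 ≤ (2 / μ) ^ 2 := by
  have h := weighted_coercive hb hμ hρ hβρ hY.1
  have hsum : ∑ j ∈ Finset.range m, (ρ : ℂ) ^ j *
      fourierCoeff' (fun θ => trigSum K β θ * evC Y θ) j *
      (starRingEnd ℂ) ((weighted ρ Y).coeff j) = (starRingEnd ℂ) ((weighted ρ Y).coeff 0) := by
    rw [Finset.sum_eq_single_of_mem 0 (Finset.mem_range.2 hm) (fun j hj hj0 => by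
      rw [hY.2 j (Finset.mem_range.1 hj), if_neg hj0]; simp), hY.2 0 hm]
    simp
  rw [hsum, RCLike.norm_conj] at h
  set S := ∑ j ∈ Finset.range m, ‖(weighted ρ Y).coeff j‖ ^ 2
  have h0 : ‖(weighted ρ Y).coeff 0‖ ^ 2 ≤ S :=
    Finset.single_le_sum (f := fun j => ‖(weighted ρ Y).coeff j‖ ^ 2) (fun _ _ => by positivity)
      (Finset.mem_range.2 hm)
  have hS : 0 ≤ S := (sq_nonneg _).trans h0
  have h1 : (μ / 2 * S) ^ 2 ≤ S := le_trans (by gcongr) h0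
  rcases hS.eq_or_lt with h2 | h2
  · rw [← h2]; positivity
  · have h3 : (μ / 2) ^ 2 * S ≤ 1 := by nlinarith
    rw [div_pow, le_div_iff₀ (by positivity)]
    nlinarith

/-- The first column depends on the symbol in a Lipschitz way, in the weighted norm. -/
lemma IsFirstCol.sum_weighted_sub_le {K : ℕ} {β γ : ℤ → ℂ} {b : ℝ → ℝ}
    (hb : ∀ θ, (b θ : ℂ) = trigSum K β θ)
    {μ : ℝ} (hμ0 : 0 < μ) (hμ : ∀ θ, μ ≤ b θ) {ρ : ℝ} (hρ : 0 < ρ)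
    (hβρ : ∑ l ∈ Finset.Icc (-(K : ℤ)) (K : ℤ), ‖(ρ : ℂ) ^ l * β l - β l‖ ≤ μ / 2)
    {Y Z : Polynomial ℂ} {m : ℕ} (hY : IsFirstCol (trigSum K β) m Y)
    (hZ : IsFirstCol (trigSum K γ) m Z) {B s : ℝ}
    (hZB : ∑ j ∈ Finset.range m, ‖(weighted ρ Z).coeff j‖ ^ 2 ≤ B ^ 2)
    (hs : ∑ l ∈ Finset.Icc (-(K : ℤ)) (K : ℤ), ‖(ρ : ℂ) ^ l * (β l - γ l)‖ ≤ s) :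
    ∑ j ∈ Finset.range m, ‖(weighted ρ (Y - Z)).coeff j‖ ^ 2 ≤ (2 * s * B / μ) ^ 2 := by
  have hYZ : (Y - Z).degree < m :=
    (Polynomial.degree_sub_le _ _).trans_lt (max_lt hY.1 hZ.1)
  have h := weighted_coercive hb hμ hρ hβρ hYZ
  have key : ∀ j ∈ Finset.range m,
      (ρ : ℂ) ^ j * fourierCoeff' (fun θ => trigSum K β θ * evC (Y - Z) θ) j =
      - fourierCoeff' (fun θ => trigSum K (fun l => (ρ : ℂ) ^ l * (β l - γ l)) θ *
        evC (weighted ρ Z) θ) j := by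
    intro j hj
    rw [fourierCoeff'_weighted hZ.1 hρ, ← mul_neg]
    congr 1
    have e1 := hY.2 j (Finset.mem_range.1 hj)
    have e2 := hZ.2 j (Finset.mem_range.1 hj)
    have e3 : fourierCoeff' (fun θ => trigSum K β θ * evC (Y - Z) θ) j +
        fourierCoeff' (fun θ => trigSum K (fun l => β l - γ l) θ * evC Z θ) j +
        fourierCoeff' (fun θ => trigSum K γ θ * evC Z θ) j =
        fourierCoeff' (fun θ => trigSum K β θ * evC Y θ) j := by
      simp only [fourierCoeff'_eq]
      rw [← circMean_add (by fun_prop) (by fun_prop), ← circMean_add (by fun_prop) (by fun_prop)]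
      congr 1; funext θ
      rw [← trigSum_sub]
      simp only [evC, Polynomial.eval_sub]
      ring
    rw [e1, e2] at e3
    linear_combination e3
  have hsum : ∑ j ∈ Finset.range m, (ρ : ℂ) ^ j *
      fourierCoeff' (fun θ => trigSum K β θ * evC (Y - Z) θ) j *
      (starRingEnd ℂ) ((weighted ρ (Y - Z)).coeff j) =
      - ∑ j ∈ Finset.range m, fourierCoeff' (fun θ => trigSum K (fun l => (ρ : ℂ) ^ l *
        (β l - γ l)) θ * evC (weighted ρ Z) θ) j *
        (starRingEnd ℂ) ((weighted ρ (Y - Z)).coeff j) := by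
    rw [← Finset.sum_neg_distrib]
    exact Finset.sum_congr rfl fun j hj => by rw [key j hj, neg_mul]
  rw [hsum, norm_neg] at h
  rw [sum_fourierCoeff_mul_conj (by fun_prop) (weighted_degree hYZ)] at h
  set D := weighted ρ (Y - Z)
  have hs0 : 0 ≤ s := le_trans (Finset.sum_nonneg fun _ _ => norm_nonneg _) hs
  have h2 : ‖circMean (fun θ => trigSum K (fun l => (ρ : ℂ) ^ l * (β l - γ l)) θ *
        evC (weighted ρ Z) θ * (starRingEnd ℂ) (evC D θ))‖ ≤
      circMeanR (fun θ => μ / 4 * ‖evC D θ‖ ^ 2 + s ^ 2 / μ * ‖evC (weighted ρ Z) θ‖ ^ 2) := by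
    refine (norm_circMean_le _).trans (circMeanR_mono (by fun_prop) (by fun_prop) fun θ => ?_)
    rw [norm_mul, norm_mul, RCLike.norm_conj]
    have h3 := (norm_trigSum_le K (fun l => (ρ : ℂ) ^ l * (β l - γ l)) θ).trans hs
    set p := ‖evC D θ‖
    set q := ‖evC (weighted ρ Z) θ‖
    have hp : 0 ≤ p := norm_nonneg _
    have hq : 0 ≤ q := norm_nonneg _
    have : s * q * p ≤ μ / 4 * p ^ 2 + s ^ 2 / μ * q ^ 2 := by
      have : μ / 4 * p ^ 2 + s ^ 2 / μ * q ^ 2 - s * q * p = (μ * p / 2 - s * q) ^ 2 / μ := by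
        field_simp; ring
      have : 0 ≤ (μ * p / 2 - s * q) ^ 2 / μ := by positivity
      linarith
    refine le_trans ?_ this
    gcongr
  rw [circMeanR_add (by fun_prop) (by fun_prop), circMeanR_const_mul, circMeanR_const_mul,
    circMeanR_normSq_evC (weighted_degree hYZ), circMeanR_normSq_evC (weighted_degree hZ.1)] at h2
  set S := ∑ j ∈ Finset.range m, ‖D.coeff j‖ ^ 2
  have h4 : s ^ 2 / μ * ∑ j ∈ Finset.range m, ‖(weighted ρ Z).coeff j‖ ^ 2 ≤ s ^ 2 / μ * B ^ 2 := by
    gcongr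
  have h5 : μ / 4 * S ≤ s ^ 2 / μ * B ^ 2 := by linarith
  have h6 : (2 * s * B / μ) ^ 2 = 4 / μ * (s ^ 2 / μ * B ^ 2) := by field_simp; ring
  rw [h6]
  calc S = 4 / μ * (μ / 4 * S) := by field_simp
    _ ≤ _ := by gcongr

/-- A section with a positive symbol is injective. -/
lemma section_injective {b : ℝ → ℝ} (hbc : Continuous b) {μ : ℝ} (hμ0 : 0 < μ)
    (hμ : ∀ θ, μ ≤ b θ) {Y : Polynomial ℂ} {m : ℕ} (hY : Y.degree < m)
    (h : ∀ j < m, fourierCoeff' (fun θ => (b θ : ℂ) * evC Y θ) j = 0) : Y = 0 := by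
  have h1 := sum_fourierCoeff_mul_conj (g := fun θ => (b θ : ℂ) * evC Y θ) (by fun_prop) hY
  rw [Finset.sum_eq_zero (fun j hj => by rw [h j (Finset.mem_range.1 hj), zero_mul])] at h1
  have h2 : circMeanR (fun θ => μ * ‖evC Y θ‖ ^ 2) ≤ 0 := by
    have := congrArg Complex.re h1
    rw [circMean_re (by fun_prop)] at this
    rw [Complex.zero_re] at this
    rw [this]
    refine circMeanR_mono (by fun_prop) (by fun_prop) fun θ => ?_
    rw [mul_assoc, Complex.mul_conj', ← Complex.ofReal_pow, ← Complex.ofReal_mul, Complex.ofReal_re]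
    gcongr
    exact hμ θ
  rw [circMeanR_const_mul, circMeanR_normSq_evC hY] at h2
  have h3 : ∑ j ∈ Finset.range m, ‖Y.coeff j‖ ^ 2 ≤ 0 ^ 2 := by
    have : 0 ≤ ∑ j ∈ Finset.range m, ‖Y.coeff j‖ ^ 2 := Finset.sum_nonneg fun _ _ => by positivity
    nlinarith
  ext j
  simpa using norm_coeff_le_of_sum (j := j) hY le_rfl h3

lemma exists_isFirstCol {b : ℝ → ℝ} (hbc : Continuous b) {μ : ℝ} (hμ0 : 0 < μ)
    (hμ : ∀ θ, μ ≤ b θ) (m : ℕ) : ∃ Y, IsFirstCol (fun θ => (b θ : ℂ)) m Y := by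
  let L : Polynomial.degreeLT ℂ m →ₗ[ℂ] (Fin m → ℂ) :=
    { toFun := fun Y j => fourierCoeff' (fun θ => (b θ : ℂ) * evC Y.1 θ) (j : ℕ)
      map_add' := fun Y Z => by
        funext j
        simp only [fourierCoeff'_eq, Pi.add_apply]
        rw [← circMean_add (by fun_prop) (by fun_prop)]
        congr 1; funext θ; simp only [evC, Submodule.coe_add, Polynomial.eval_add]; ring
      map_smul' := fun a Y => by
        funext j
        simp only [fourierCoeff'_eq, Pi.smul_apply, smul_eq_mul, RingHom.id_apply]
        rw [← circMean_const_mul]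
        congr 1; funext θ
        simp only [evC, Submodule.coe_smul, Polynomial.eval_smul, smul_eq_mul]; ring }
  have hinj : Function.Injective L := by
    rw [← LinearMap.ker_eq_bot, LinearMap.ker_eq_bot']
    intro Y hY
    apply Subtype.ext
    refine section_injective hbc hμ0 hμ (Polynomial.mem_degreeLT.1 Y.2) fun j hj => ?_
    exact congrFun hY ⟨j, hj⟩
  have : FiniteDimensional ℂ (Polynomial.degreeLT ℂ m) :=
    Module.Finite.equiv (Polynomial.degreeLTEquiv ℂ m).symm
  have hsurj := (LinearMap.injective_iff_surjective_of_finrank_eq_finrank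
    (LinearEquiv.finrank_eq (Polynomial.degreeLTEquiv ℂ m))).1 hinj
  obtain ⟨Y, hY⟩ := hsurj (fun j => if (j : ℕ) = 0 then 1 else 0)
  exact ⟨Y.1, Polynomial.mem_degreeLT.1 Y.2, fun j hj => congrFun hY ⟨j, hj⟩⟩

lemma norm_exp_I_mul (θ : ℝ) : ‖Complex.exp (Complex.I * θ)‖ = 1 := by
  rw [mul_comm]; exact Complex.norm_exp_ofReal_mul_I θ

lemma norm_coeff_le_geometric {Y : Polynomial ℂ} {m : ℕ} (hY : Y.degree < m) {ρ : ℝ} (hρ : 0 < ρ)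
    {B : ℝ} (hB : 0 ≤ B)
    (h : ∑ j ∈ Finset.range m, ‖(weighted ρ Y).coeff j‖ ^ 2 ≤ B ^ 2) (j : ℕ) :
    ‖Y.coeff j‖ ≤ B * ρ⁻¹ ^ j := by
  have h1 := norm_coeff_le_of_sum (j := j) (weighted_degree hY) hB h
  rw [weighted_coeff, norm_mul, norm_pow, Complex.norm_real, Real.norm_of_nonneg hρ.le] at h1
  rw [inv_pow, ← div_eq_mul_inv, le_div_iff₀ (by positivity)]
  linarith

lemma norm_evC_le {Y : Polynomial ℂ} {m : ℕ} (hY : Y.degree < m) {r : ℝ} (hr0 : 0 ≤ r) (hr : r < 1)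
    {B : ℝ} (hB : 0 ≤ B) (h : ∀ j, ‖Y.coeff j‖ ≤ B * r ^ j) (θ : ℝ) :
    ‖evC Y θ‖ ≤ B * ∑' j : ℕ, r ^ j := by
  rw [evC_eq_sum hY]
  refine (norm_sum_le _ _).trans ?_
  calc _ ≤ ∑ j ∈ Finset.range m, B * r ^ j := Finset.sum_le_sum fun j _ => by
        rw [norm_mul]
        have : Complex.I * ((j : ℤ) : ℂ) * (θ : ℂ) = Complex.I * ((j * θ : ℝ) : ℂ) := by
          push_cast; ring
        rw [this, norm_exp_I_mul, mul_one]; exact h j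
    _ = B * ∑ j ∈ Finset.range m, r ^ j := by rw [Finset.mul_sum]
    _ ≤ _ := by
        gcongr
        exact (summable_geometric_of_lt_one hr0 hr).sum_le_tsum _ (fun _ _ => by positivity)

lemma sum_mul_norm_coeff_le {Y : Polynomial ℂ} {r : ℝ} (hr0 : 0 ≤ r)
    (hr : r < 1) {B : ℝ} (hB : 0 ≤ B) (h : ∀ j, ‖Y.coeff j‖ ≤ B * r ^ j) (m : ℕ) :
    ∑ j ∈ Finset.range m, (j : ℝ) * ‖Y.coeff j‖ ≤ B * ∑' j : ℕ, (j : ℝ) * r ^ j := by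
  have hs : Summable (fun j : ℕ => (j : ℝ) * r ^ j) := by
    simpa using summable_pow_mul_geometric_of_norm_lt_one 1
      (by rwa [Real.norm_of_nonneg hr0] : ‖r‖ < 1)
  calc _ ≤ ∑ j ∈ Finset.range m, B * (j * r ^ j) := Finset.sum_le_sum fun j _ => by
        have := mul_le_mul_of_nonneg_left (h j) (Nat.cast_nonneg (α := ℝ) j)
        linarith
    _ = B * ∑ j ∈ Finset.range m, (j : ℝ) * r ^ j := by rw [Finset.mul_sum]
    _ ≤ _ := by
        gcongr
        exact hs.sum_le_tsum _ (fun _ _ => by positivity)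

/-- The divided difference `(Y(s) - Y(t)) / (s - t)`. -/
noncomputable def divDiff (Y : Polynomial ℂ) (m : ℕ) (s t : ℂ) : ℂ :=
  ∑ k ∈ Finset.range m, Y.coeff k * ∑ i ∈ Finset.range k, s ^ i * t ^ (k - 1 - i)

lemma evC_eq_sum_pow {Y : Polynomial ℂ} {m : ℕ} (hY : Y.degree < m) (θ : ℝ) :
    evC Y θ = ∑ k ∈ Finset.range m, Y.coeff k * Complex.exp (Complex.I * θ) ^ k := by
  rw [evC_eq_sum hY]
  refine Finset.sum_congr rfl fun k _ => ?_
  rw [← Complex.exp_nat_mul]; congr 2; push_cast; ring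

lemma divDiff_mul {Y : Polynomial ℂ} {m : ℕ} (hY : Y.degree < m) (θ τ : ℝ) :
    evC Y θ = evC Y τ + divDiff Y m (Complex.exp (Complex.I * θ)) (Complex.exp (Complex.I * τ)) *
      (Complex.exp (Complex.I * θ) - Complex.exp (Complex.I * τ)) := by
  rw [evC_eq_sum_pow hY, evC_eq_sum_pow hY, divDiff, Finset.sum_mul, ← Finset.sum_add_distrib]
  refine Finset.sum_congr rfl fun k _ => ?_
  rw [mul_assoc, geom_sum₂_mul]; ring

lemma norm_divDiff_le (Y : Polynomial ℂ) (m : ℕ) {s t : ℂ} (hs : ‖s‖ = 1) (ht : ‖t‖ = 1) :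
    ‖divDiff Y m s t‖ ≤ ∑ j ∈ Finset.range m, (j : ℝ) * ‖Y.coeff j‖ := by
  unfold divDiff
  refine (norm_sum_le _ _).trans (Finset.sum_le_sum fun k _ => ?_)
  rw [norm_mul, mul_comm]
  gcongr
  refine (norm_sum_le _ _).trans ?_
  simp [hs, ht]

lemma norm_evC_sub_le {Y : Polynomial ℂ} {m : ℕ} (hY : Y.degree < m) (θ τ : ℝ) :
    ‖evC Y θ - evC Y τ‖ ≤ (∑ j ∈ Finset.range m, (j : ℝ) * ‖Y.coeff j‖) * |θ - τ| := by
  rw [divDiff_mul hY θ τ, add_sub_cancel_left, norm_mul]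
  have h0 : 0 ≤ ∑ j ∈ Finset.range m, (j : ℝ) * ‖Y.coeff j‖ :=
    Finset.sum_nonneg fun _ _ => by positivity
  gcongr
  · exact norm_divDiff_le Y m (norm_exp_I_mul _) (norm_exp_I_mul _)
  · have h : Complex.exp (Complex.I * θ) - Complex.exp (Complex.I * τ) =
        Complex.exp (Complex.I * τ) * (Complex.exp (Complex.I * ((θ - τ : ℝ) : ℂ)) - 1) := by
      rw [mul_sub, ← Complex.exp_add, mul_one]; congr 2; push_cast; ring
    rw [h, norm_mul, norm_exp_I_mul, one_mul]
    exact Real.norm_exp_I_mul_ofReal_sub_one_le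

/-- The first column polynomial is bounded away from zero on the unit circle: if `Y(t)` is small
with `|t| = 1`, write `Y = Y(t) + (s - t) Z(s)` and test `T(b) Y = e₀` against `s Z(s)`; since
`Re ((s - t) / s) = |s - t|² / 2`, this makes the `b`-weighted mean of `|Y - Y(t)|²` small,
contradicting that the mean of `b Y` is `1`. -/
lemma IsFirstCol.lower_bound {b : ℝ → ℝ} (hbc : Continuous b) (hb0 : ∀ θ, 0 ≤ b θ) {M : ℝ}
    (hM0 : 0 < M) (hM : ∀ θ, b θ ≤ M) {m : ℕ} (hm : 0 < m) {Y : Polynomial ℂ}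
    (hY : IsFirstCol (fun θ => (b θ : ℂ)) m Y) {S : ℝ}
    (hS : ∑ j ∈ Finset.range m, (j : ℝ) * ‖Y.coeff j‖ ≤ S) (τ : ℝ) :
    1 ≤ 2 * (M ^ 2 * S + M) * ‖evC Y τ‖ := by
  set t := Complex.exp (Complex.I * τ) with ht
  have ht1 : ‖t‖ = 1 := norm_exp_I_mul τ
  have hS0 : 0 ≤ S := le_trans (Finset.sum_nonneg fun _ _ => by positivity) hS
  set a := evC Y τ with ha
  let Z : ℝ → ℂ := fun θ => divDiff Y m (Complex.exp (Complex.I * θ)) t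
  have hZc : Continuous Z := by simp only [Z, divDiff]; fun_prop
  have hZ : ∀ θ, evC Y θ = a + Z θ * (Complex.exp (Complex.I * θ) - t) := fun θ => divDiff_mul hY.1 θ τ
  have hZS : ∀ θ, ‖Z θ‖ ≤ S := fun θ => (norm_divDiff_le Y m (norm_exp_I_mul θ) ht1).trans hS
  -- `s Z(s)` has no constant term and degree `< m`, so it is orthogonal to `b Y`
  have horth : circMean (fun θ => (b θ : ℂ) * evC Y θ *
      (starRingEnd ℂ) (Complex.exp (Complex.I * θ) * Z θ)) = 0 := by
    have : (fun θ => (b θ : ℂ) * evC Y θ *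
        (starRingEnd ℂ) (Complex.exp (Complex.I * θ) * Z θ)) = fun θ : ℝ =>
        ∑ k ∈ Finset.range m, ∑ i ∈ Finset.range k,
          ((starRingEnd ℂ) (Y.coeff k * t ^ (k - 1 - i))) *
          (Complex.exp (-Complex.I * (((i + 1 : ℕ) : ℤ) : ℂ) * θ) * ((b θ : ℂ) * evC Y θ)) := by
      funext θ
      simp only [Z, divDiff, Finset.mul_sum, map_sum]
      refine Finset.sum_congr rfl fun k _ => Finset.sum_congr rfl fun i _ => ?_
      have : Complex.exp (-Complex.I * (((i + 1 : ℕ) : ℤ) : ℂ) * θ) =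
          (starRingEnd ℂ) (Complex.exp (Complex.I * θ) * Complex.exp (Complex.I * θ) ^ i) := by
        rw [← pow_succ', ← Complex.exp_nat_mul, ← Complex.exp_conj]
        congr 1
        simp only [map_mul, Complex.conj_I, Complex.conj_ofReal, map_natCast]
        push_cast; ring
      rw [this]
      simp only [map_mul]
      ring
    rw [this, circMean_sum _ (fun k _ => by fun_prop)]
    refine Finset.sum_eq_zero fun k hk => ?_
    rw [circMean_sum _ (fun i _ => by fun_prop)]
    refine Finset.sum_eq_zero fun i hi => ?_
    rw [circMean_const_mul]
    have h := hY.2 (i + 1) (by rw [Finset.mem_range] at hk hi; omega)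
    rw [fourierCoeff'_eq, if_neg (by omega)] at h
    rw [h, mul_zero]
  set J := circMeanR (fun θ => b θ * ‖evC Y θ - a‖ ^ 2) with hJ
  have hJle : J ≤ 2 * (‖a‖ * M * S) := by
    have h1 := congrArg Complex.re horth
    rw [circMean_re (by fun_prop), Complex.zero_re] at h1
    have h2 : circMeanR (fun θ => 2⁻¹ * (b θ * ‖evC Y θ - a‖ ^ 2) + (-(‖a‖ * M * S))) ≤ 0 := by
      rw [← h1]
      refine circMeanR_mono (by fun_prop) (by fun_prop) fun θ => ?_
      set s := Complex.exp (Complex.I * θ) with hs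
      have hs1 : ‖s‖ = 1 := norm_exp_I_mul θ
      have e1 : (b θ : ℂ) * evC Y θ * (starRingEnd ℂ) (s * Z θ) =
          (b θ : ℂ) * (a * (starRingEnd ℂ) (s * Z θ)) +
          ((b θ * ‖Z θ‖ ^ 2 : ℝ) : ℂ) * ((s - t) * (starRingEnd ℂ) s) := by
        rw [hZ θ, ← hs]
        push_cast
        rw [← Complex.mul_conj', map_mul]; ring
      have e2 : ((s - t) * (starRingEnd ℂ) s).re = 2⁻¹ * ‖s - t‖ ^ 2 := by
        rw [← Complex.normSq_eq_norm_sq, Complex.normSq_sub, Complex.normSq_eq_norm_sq,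
          Complex.normSq_eq_norm_sq, hs1, ht1, sub_mul, Complex.mul_conj', hs1]
        simp
        ring
      have e3 : ‖evC Y θ - a‖ ^ 2 = ‖Z θ‖ ^ 2 * ‖s - t‖ ^ 2 := by
        rw [hZ θ, add_sub_cancel_left, norm_mul, mul_pow]
      have e4 : -(‖a‖ * M * S) ≤ ((b θ : ℂ) * (a * (starRingEnd ℂ) (s * Z θ))).re := by
        have : ‖(b θ : ℂ) * (a * (starRingEnd ℂ) (s * Z θ))‖ ≤ ‖a‖ * M * S := by
          rw [norm_mul, norm_mul, RCLike.norm_conj, norm_mul, hs1, one_mul, Complex.norm_real,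
            Real.norm_of_nonneg (hb0 θ)]
          calc b θ * (‖a‖ * ‖Z θ‖) ≤ M * (‖a‖ * S) := by gcongr; exacts [hM θ, hZS θ]
            _ = _ := by ring
        exact (abs_le.1 ((Complex.abs_re_le_norm _).trans this)).1
      rw [e1, Complex.add_re, Complex.re_ofReal_mul (b θ * ‖Z θ‖ ^ 2), e2, e3]
      linarith
    rw [circMeanR_add (by fun_prop) (by fun_prop), circMeanR_const_mul, circMeanR_const] at h2
    linarith
  have h0 := hY.2 0 hm
  rw [if_pos rfl, fourierCoeff'_eq] at h0
  simp only [Nat.cast_zero, Int.cast_zero, mul_zero, zero_mul, Complex.exp_zero, one_mul] at h0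
  have h3 : (1 : ℝ) ≤ circMeanR (fun θ => (M * ‖a‖ + 2⁻¹) + (M / 2) * (b θ * ‖evC Y θ - a‖ ^ 2)) := by
    have : (1 : ℝ) = ‖circMean (fun θ => (b θ : ℂ) * evC Y θ)‖ := by rw [h0]; simp
    rw [this]
    refine (norm_circMean_le _).trans (circMeanR_mono (by fun_prop) (by fun_prop) fun θ => ?_)
    rw [norm_mul, Complex.norm_real, Real.norm_of_nonneg (hb0 θ)]
    have h4 : ‖evC Y θ‖ ≤ ‖a‖ + ‖evC Y θ - a‖ := by
      have := norm_add_le a (evC Y θ - a); simpa using this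
    have hw := norm_nonneg (evC Y θ - a)
    have h5 : b θ * ‖evC Y θ‖ ≤ b θ * ‖a‖ + b θ * ‖evC Y θ - a‖ := by
      rw [← mul_add]; exact mul_le_mul_of_nonneg_left h4 (hb0 θ)
    have h6 : b θ * ‖a‖ ≤ M * ‖a‖ := by gcongr; exact hM θ
    set w := ‖evC Y θ - a‖
    have h7 : b θ * w ≤ 2⁻¹ + M / 2 * (b θ * w ^ 2) := by
      have : b θ * w = M * w * (b θ / M) := by field_simp
      have hq : b θ / M ≤ 1 := by rw [div_le_one hM0]; exact hM θ
      have hq0 : 0 ≤ b θ / M := div_nonneg (hb0 θ) hM0.le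
      have hbq : b θ = M * (b θ / M) := by field_simp
      set q := b θ / M
      rw [hbq]
      nlinarith [mul_nonneg hq0 (sq_nonneg (M * w - 1))]
    linarith
  rw [circMeanR_add (by fun_prop) (by fun_prop), circMeanR_const, circMeanR_const_mul, ← hJ] at h3
  nlinarith [mul_le_mul_of_nonneg_left hJle (by positivity : 0 ≤ M / 2)]

/-! ### The null space of a section whose symbol has two zeros -/

/-- The reversed polynomial `X ^ (m - 1) * conj Y (1 / X)`. -/
noncomputable def revConj (m : ℕ) (Y : Polynomial ℂ) : Polynomial ℂ :=
  ∑ j ∈ Finset.range m, Polynomial.monomial j ((starRingEnd ℂ) (Y.coeff (m - 1 - j)))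

lemma revConj_degree (m : ℕ) (Y : Polynomial ℂ) : (revConj m Y).degree < m := by
  unfold revConj
  rw [← Polynomial.mem_degreeLT]
  refine Submodule.sum_mem _ fun j hj => ?_
  rw [Polynomial.mem_degreeLT]
  refine (Polynomial.degree_monomial_le _ _).trans_lt ?_
  exact_mod_cast Finset.mem_range.1 hj

lemma evC_revConj {Y : Polynomial ℂ} {m : ℕ} (hY : Y.degree < m) (θ : ℝ) :
    evC (revConj m Y) θ =
      Complex.exp (Complex.I * θ) ^ (m - 1) * (starRingEnd ℂ) (evC Y θ) := by
  rw [evC_eq_sum_pow hY, ← Finset.sum_range_reflect, map_sum, Finset.mul_sum]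
  simp only [evC, revConj, Polynomial.eval_finsetSum, Polynomial.eval_monomial]
  refine Finset.sum_congr rfl fun j hj => ?_
  have hj' := Finset.mem_range.1 hj
  have h1 : Complex.exp (Complex.I * θ) * (starRingEnd ℂ) (Complex.exp (Complex.I * θ)) = 1 := by
    rw [Complex.mul_conj', norm_exp_I_mul]; simp
  have h2 : m - 1 = j + (m - 1 - j) := by omega
  rw [map_mul, map_pow]
  conv_rhs => rw [h2, pow_add]
  have h3 : j + (m - 1 - j) - j = m - 1 - j := by omega
  rw [h3]
  have h4 := congrArg (· ^ (m - 1 - j)) h1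
  simp only [mul_pow, one_pow] at h4
  linear_combination (-(starRingEnd ℂ) (Y.coeff (m - 1 - j)) *
    Complex.exp (Complex.I * θ) ^ j) * h4

lemma fourierCoeff'_revConj (b : ℝ → ℝ) {Y : Polynomial ℂ} {m : ℕ} (hY : Y.degree < m)
    {j : ℕ} (hj : j < m) :
    fourierCoeff' (fun θ => (b θ : ℂ) * evC (revConj m Y) θ) j =
      (starRingEnd ℂ) (fourierCoeff' (fun θ => (b θ : ℂ) * evC Y θ) ((m - 1 - j : ℕ) : ℤ)) := by
  rw [fourierCoeff'_eq, fourierCoeff'_eq, ← circMean_conj]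
  congr 1; funext θ
  rw [evC_revConj hY, map_mul, map_mul, Complex.conj_ofReal, ← Complex.exp_conj]
  have : Complex.exp ((starRingEnd ℂ) (-Complex.I * (((m - 1 - j : ℕ) : ℤ) : ℂ) * θ)) =
      Complex.exp (-Complex.I * ((j : ℤ) : ℂ) * θ) * Complex.exp (Complex.I * θ) ^ (m - 1) := by
    rw [← Complex.exp_nat_mul, ← Complex.exp_add]
    congr 1
    simp only [map_mul, map_neg, Complex.conj_I, Complex.conj_ofReal, map_intCast]
    have : m - 1 = j + (m - 1 - j) := by omega
    rw [this]
    push_cast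
    simp only [add_tsub_cancel_left]
    ring
  rw [this]; ring

lemma IsFirstCol.revConj {b : ℝ → ℝ} {m : ℕ} {Y : Polynomial ℂ}
    (hY : IsFirstCol (fun θ => (b θ : ℂ)) m Y) {j : ℕ} (hj : j < m) :
    fourierCoeff' (fun θ => (b θ : ℂ) * evC (revConj m Y) θ) j = if j = m - 1 then 1 else 0 := by
  rw [fourierCoeff'_revConj b hY.1 hj, hY.2 _ (by omega)]
  by_cases h : j = m - 1
  · rw [if_pos (by omega), if_pos h, map_one]
  · rw [if_neg (by omega), if_neg h, map_zero]

lemma fourierCoeff'_lin {b : ℝ → ℝ} (hbc : Continuous b) (p q : ℂ) (Y Z : Polynomial ℂ) (j : ℤ) :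
    fourierCoeff' (fun θ => (b θ : ℂ) * evC (Polynomial.C p * Y + Polynomial.C q * Z) θ) j =
      p * fourierCoeff' (fun θ => (b θ : ℂ) * evC Y θ) j +
      q * fourierCoeff' (fun θ => (b θ : ℂ) * evC Z θ) j := by
  simp only [fourierCoeff'_eq]
  rw [← circMean_const_mul, ← circMean_const_mul, ← circMean_add (by fun_prop) (by fun_prop)]
  congr 1; funext θ
  simp only [evC, Polynomial.eval_add, Polynomial.eval_mul, Polynomial.eval_C]
  ring

/-- The quadratic polynomial with roots `e^{iα}`, `e^{iγ}`. -/
noncomputable def twoRoots (α γ : ℝ) : Polynomial ℂ :=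
  (Polynomial.X - Polynomial.C (Complex.exp (Complex.I * α))) *
    (Polynomial.X - Polynomial.C (Complex.exp (Complex.I * γ)))

/-- `V` solves the equation `T_n V = 0` for the symbol with zeros `e^{iα}`, `e^{iγ}` and positive
cofactor `b`. -/
def InKer (b : ℝ → ℝ) (α γ : ℝ) (n : ℕ) (V : Polynomial ℂ) : Prop :=
  V.degree < n ∧
    ∀ j < n, fourierCoeff' (fun θ => (b θ : ℂ) * evC (twoRoots α γ * V) θ) ((j + 1 : ℕ) : ℤ) = 0

lemma twoRoots_degree (α γ : ℝ) : (twoRoots α γ).degree = 2 := by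
  unfold twoRoots
  rw [Polynomial.degree_mul, Polynomial.degree_X_sub_C, Polynomial.degree_X_sub_C]; rfl

lemma twoRoots_ne_zero (α γ : ℝ) : twoRoots α γ ≠ 0 := by
  intro h; have := twoRoots_degree α γ; rw [h] at this; simp at this

lemma degree_twoRoots_mul_lt_iff (α γ : ℝ) (V : Polynomial ℂ) (n : ℕ) :
    (twoRoots α γ * V).degree < ((n + 2 : ℕ) : WithBot ℕ) ↔ V.degree < n := by
  rcases eq_or_ne V 0 with rfl | hV
  · simp only [mul_zero, Polynomial.degree_zero]
    exact ⟨fun _ => WithBot.bot_lt_coe _, fun _ => WithBot.bot_lt_coe _⟩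
  · rw [Polynomial.degree_mul, twoRoots_degree, Polynomial.degree_eq_natDegree hV]
    norm_cast
    omega

lemma evC_twoRoots_left (α γ : ℝ) (V : Polynomial ℂ) : evC (twoRoots α γ * V) α = 0 := by
  simp [evC, twoRoots]

lemma evC_twoRoots_right (α γ : ℝ) (V : Polynomial ℂ) : evC (twoRoots α γ * V) γ = 0 := by
  simp [evC, twoRoots]

lemma exists_eq_twoRoots_mul {α γ : ℝ}
    (hne : Complex.exp (Complex.I * α) ≠ Complex.exp (Complex.I * γ))
    {G : Polynomial ℂ} (h1 : evC G α = 0) (h2 : evC G γ = 0) : ∃ V, G = twoRoots α γ * V := by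
  have d1 : (Polynomial.X - Polynomial.C (Complex.exp (Complex.I * α))) ∣ G :=
    Polynomial.dvd_iff_isRoot.2 h1
  have d2 : (Polynomial.X - Polynomial.C (Complex.exp (Complex.I * γ))) ∣ G :=
    Polynomial.dvd_iff_isRoot.2 h2
  exact IsCoprime.mul_dvd (Polynomial.isCoprime_X_sub_C_of_isUnit_sub
    (sub_ne_zero.2 hne).isUnit) d1 d2

/-- Every null vector is, after multiplication by `twoRoots α γ`, a multiple of one explicit
combination of the first and last columns of the inverse of the section of order `n + 2`. -/
lemma InKer.eq_smul {b : ℝ → ℝ} (hbc : Continuous b) {μ : ℝ} (hμ0 : 0 < μ) (hμ : ∀ θ, μ ≤ b θ)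
    {α γ : ℝ} {n : ℕ} {Y : Polynomial ℂ} (hY : IsFirstCol (fun θ => (b θ : ℂ)) (n + 2) Y)
    (h1 : evC Y α ≠ 0) {V : Polynomial ℂ} (hV : InKer b α γ n V) :
    ∃ q : ℂ, twoRoots α γ * V = Polynomial.C (-q * (evC (revConj (n + 2) Y) α / evC Y α)) * Y +
      Polynomial.C q * revConj (n + 2) Y := by
  set G := twoRoots α γ * V with hG
  have hGd : G.degree < ((n + 2 : ℕ) : WithBot ℕ) := (degree_twoRoots_mul_lt_iff α γ V n).2 hV.1
  set p := fourierCoeff' (fun θ => (b θ : ℂ) * evC G θ) ((0 : ℕ) : ℤ)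
  set q := fourierCoeff' (fun θ => (b θ : ℂ) * evC G θ) ((n + 1 : ℕ) : ℤ)
  have key : Polynomial.C 1 * G + Polynomial.C (-1) *
      (Polynomial.C p * Y + Polynomial.C q * revConj (n + 2) Y) = 0 := by
    refine section_injective hbc hμ0 hμ (m := n + 2) ?_ fun j hj => ?_
    · rw [← Polynomial.mem_degreeLT]
      simp only [← Polynomial.smul_eq_C_mul]
      have a1 := Polynomial.mem_degreeLT.2 hY.1
      have a2 := Polynomial.mem_degreeLT.2 (revConj_degree (n + 2) Y)
      have a3 := Polynomial.mem_degreeLT.2 hGd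
      exact Submodule.add_mem _ (Submodule.smul_mem _ _ a3) (Submodule.smul_mem _ _
        (Submodule.add_mem _ (Submodule.smul_mem _ _ a1) (Submodule.smul_mem _ _ a2)))
    · rw [fourierCoeff'_lin hbc, fourierCoeff'_lin hbc, hY.2 j hj, hY.revConj hj]
      rcases Nat.eq_zero_or_pos j with rfl | hj0
      · simp [p]
      · rcases Nat.lt_or_ge j (n + 1) with hjn | hjn
        · obtain ⟨i, rfl⟩ : ∃ i, j = i + 1 := ⟨j - 1, by omega⟩
          rw [hV.2 i (by omega), if_neg (by omega), if_neg (by omega)]; simp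
        · obtain rfl : j = n + 1 := by omega
          simp [q]
  have hG2 : G = Polynomial.C p * Y + Polynomial.C q * revConj (n + 2) Y := by
    simp only [map_one, map_neg, one_mul, neg_mul] at key
    exact sub_eq_zero.1 (by rw [sub_eq_add_neg]; exact key)
  refine ⟨q, ?_⟩
  have e := evC_twoRoots_left α γ V
  rw [← hG, hG2] at e
  simp only [evC, Polynomial.eval_add, Polynomial.eval_mul, Polynomial.eval_C] at e h1
  have hp : p = -q * (evC (revConj (n + 2) Y) α / evC Y α) := by
    simp only [evC]
    field_simp
    linear_combination e
  rw [← hp]; exact hG2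

lemma InKer.dependent {b : ℝ → ℝ} (hbc : Continuous b) {μ : ℝ} (hμ0 : 0 < μ) (hμ : ∀ θ, μ ≤ b θ)
    {α γ : ℝ} {n : ℕ} {Y : Polynomial ℂ} (hY : IsFirstCol (fun θ => (b θ : ℂ)) (n + 2) Y)
    (h1 : evC Y α ≠ 0) {V V' : Polynomial ℂ} (hV : InKer b α γ n V) (hV' : InKer b α γ n V') :
    ∃ s s' : ℂ, (s ≠ 0 ∨ s' ≠ 0) ∧ s • V + s' • V' = 0 := by
  obtain ⟨q, hq⟩ := hV.eq_smul hbc hμ0 hμ hY h1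
  obtain ⟨q', hq'⟩ := hV'.eq_smul hbc hμ0 hμ hY h1
  by_cases h : q = 0
  · refine ⟨1, 0, by simp, ?_⟩
    have : twoRoots α γ * V = 0 := by rw [hq, h]; simp
    simpa [twoRoots_ne_zero] using this
  · refine ⟨q', -q, by simp [h], ?_⟩
    have : twoRoots α γ * (q' • V + (-q) • V') = 0 := by
      rw [mul_add, mul_smul_comm, mul_smul_comm, hq, hq']
      simp only [Polynomial.smul_eq_C_mul, map_neg, map_mul]
      ring
    simpa [twoRoots_ne_zero] using this

/-- The null space is nontrivial exactly when the values of the first column at the two zeros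
satisfy one scalar equation. -/
lemma exists_inKer_iff {b : ℝ → ℝ} (hbc : Continuous b) {μ : ℝ} (hμ0 : 0 < μ) (hμ : ∀ θ, μ ≤ b θ)
    {α γ : ℝ} (hne : Complex.exp (Complex.I * α) ≠ Complex.exp (Complex.I * γ))
    {n : ℕ} {Y : Polynomial ℂ} (hY : IsFirstCol (fun θ => (b θ : ℂ)) (n + 2) Y)
    (h1 : evC Y α ≠ 0) :
    (∃ V, V ≠ 0 ∧ InKer b α γ n V) ↔
      Complex.exp (Complex.I * γ) ^ (n + 1) * (starRingEnd ℂ)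
        (evC Y γ * (starRingEnd ℂ) (evC Y α)) =
      Complex.exp (Complex.I * α) ^ (n + 1) * (evC Y γ * (starRingEnd ℂ) (evC Y α)) := by
  have r1 := evC_revConj hY.1 α
  have r2 := evC_revConj hY.1 γ
  rw [show n + 2 - 1 = n + 1 by omega] at r1 r2
  have hiff : Complex.exp (Complex.I * γ) ^ (n + 1) * (starRingEnd ℂ)
        (evC Y γ * (starRingEnd ℂ) (evC Y α)) =
      Complex.exp (Complex.I * α) ^ (n + 1) * (evC Y γ * (starRingEnd ℂ) (evC Y α)) ↔
      evC (revConj (n + 2) Y) γ * evC Y α = evC (revConj (n + 2) Y) α * evC Y γ := by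
    rw [r1, r2]
    simp only [map_mul, Complex.conj_conj]
    constructor <;> intro h <;> linear_combination h
  rw [hiff]
  constructor
  · rintro ⟨V, hV0, hV⟩
    obtain ⟨q, hq⟩ := hV.eq_smul hbc hμ0 hμ hY h1
    have hq0 : q ≠ 0 := by
      rintro rfl
      have : twoRoots α γ * V = 0 := by rw [hq]; simp
      simp [twoRoots_ne_zero, hV0] at this
    have e := evC_twoRoots_right α γ V
    rw [hq] at e
    have e' : -q * (evC (revConj (n + 2) Y) α / evC Y α) * evC Y γ +
        q * evC (revConj (n + 2) Y) γ = 0 := by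
      rw [← e]; simp only [evC, Polynomial.eval_add, Polynomial.eval_mul, Polynomial.eval_C]
    field_simp at e'
    have e'' := (mul_eq_zero.1 (e'.trans (mul_zero _))).resolve_left hq0
    linear_combination e''
  · intro h
    set G := Polynomial.C (-(evC (revConj (n + 2) Y) α / evC Y α)) * Y +
      Polynomial.C 1 * revConj (n + 2) Y with hG
    have g1 : evC G α = 0 := by
      have : evC G α = -(evC (revConj (n + 2) Y) α / evC Y α) * evC Y α +
          1 * evC (revConj (n + 2) Y) α := by
        simp only [hG, evC, Polynomial.eval_add, Polynomial.eval_mul, Polynomial.eval_C]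
      rw [this]; field_simp; ring
    have g2 : evC G γ = 0 := by
      have : evC G γ = -(evC (revConj (n + 2) Y) α / evC Y α) * evC Y γ +
          1 * evC (revConj (n + 2) Y) γ := by
        simp only [hG, evC, Polynomial.eval_add, Polynomial.eval_mul, Polynomial.eval_C]
      rw [this]; field_simp; linear_combination h
    obtain ⟨V, hV⟩ := exists_eq_twoRoots_mul hne g1 g2
    have hGd : G.degree < ((n + 2 : ℕ) : WithBot ℕ) := by
      rw [← Polynomial.mem_degreeLT, hG]
      simp only [← Polynomial.smul_eq_C_mul]
      have a1 := Polynomial.mem_degreeLT.2 hY.1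
      have a2 := Polynomial.mem_degreeLT.2 (revConj_degree (n + 2) Y)
      exact Submodule.add_mem _ (Submodule.smul_mem _ _ a1) (Submodule.smul_mem _ _ a2)
    refine ⟨V, ?_, ?_, ?_⟩
    · rintro rfl
      have e := fourierCoeff'_lin hbc (-(evC (revConj (n + 2) Y) α / evC Y α)) 1 Y
        (revConj (n + 2) Y) ((n + 1 : ℕ) : ℤ)
      rw [← hG, hV, hY.2 _ (by omega), hY.revConj (by omega)] at e
      simp [fourierCoeff'_eq, evC, circMean] at e
    · rw [hV] at hGd
      exact (degree_twoRoots_mul_lt_iff α γ V n).1 hGd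
    · intro j hj
      rw [← hV, hG, fourierCoeff'_lin hbc, hY.2 _ (by omega), hY.revConj (by omega),
        if_neg (by omega), if_neg (by omega)]
      simp

/-! ### Factoring out the two zeros of the symbol -/

/-- Coefficient of `X ^ l` in `X ^ N * (f - lam)`. -/
noncomputable def symC (N : ℕ) (c : ℤ → ℂ) (lam : ℝ) (l : ℕ) : ℂ :=
  c ((l : ℤ) - N) - if l = N then (lam : ℂ) else 0

/-- The quotient of `∑ symC l X ^ l` by `(X - e^{iα}) (X - e^{iγ})`, as an iterated divided
difference. -/
noncomputable def quotPoly (N : ℕ) (c : ℤ → ℂ) (lam α γ : ℝ) : Polynomial ℂ :=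
  ∑ l ∈ Finset.range (2 * N + 1), Polynomial.C (symC N c lam l) *
    ∑ i ∈ Finset.range l, Polynomial.C (Complex.exp (Complex.I * α) ^ (l - 1 - i)) *
      ∑ k ∈ Finset.range i,
        Polynomial.C (Complex.exp (Complex.I * γ) ^ (i - 1 - k)) * Polynomial.X ^ k

/-- Fourier coefficients of the positive cofactor of the symbol. -/
noncomputable def cofC (N : ℕ) (c : ℤ → ℂ) (lam α γ : ℝ) (l : ℤ) : ℂ :=
  Complex.exp (Complex.I * (((α + γ) / 2 : ℝ) : ℂ)) *
    if 1 - (N : ℤ) ≤ l then (quotPoly N c lam α γ).coeff (l + N - 1).toNat else 0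

lemma exp_neg_mul_sum_symC (N : ℕ) (c : ℤ → ℂ) (lam θ : ℝ) :
    trigSum N c θ - lam = Complex.exp (-Complex.I * N * θ) *
      ∑ l ∈ Finset.range (2 * N + 1), symC N c lam l * Complex.exp (Complex.I * θ) ^ l := by
  simp only [symC, sub_mul, Finset.sum_sub_distrib, mul_sub]
  congr 1
  · rw [trigSum, Finset.mul_sum]
    refine Finset.sum_bij' (fun l _ => (l + N).toNat) (fun l _ => (l : ℤ) - N) ?_ ?_ ?_ ?_ ?_
    · intro l hl; rw [Finset.mem_Icc] at hl; rw [Finset.mem_range]; omega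
    · intro l hl; rw [Finset.mem_range] at hl; rw [Finset.mem_Icc]; omega
    · intro l hl; rw [Finset.mem_Icc] at hl; omega
    · intro l hl; omega
    · intro l hl
      rw [Finset.mem_Icc] at hl
      obtain ⟨k, hk⟩ : ∃ k : ℕ, l + N = k := ⟨(l + N).toNat, by omega⟩
      have hl' : l = (k : ℤ) - N := by omega
      rw [hk, hl', Int.toNat_natCast, ← Complex.exp_nat_mul, mul_left_comm, ← Complex.exp_add]
      congr 2; push_cast; ring
  · simp only [ite_mul, zero_mul]
    rw [Finset.sum_ite_eq' (Finset.range (2 * N + 1)) N, if_pos (Finset.mem_range.2 (by omega)),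
      ← Complex.exp_nat_mul, mul_left_comm, ← Complex.exp_add]
    ring_nf; simp

lemma sum_symC_eq {N : ℕ} {c : ℤ → ℂ} {lam α γ : ℝ}
    (hne : Complex.exp (Complex.I * α) ≠ Complex.exp (Complex.I * γ))
    (hα : trigSum N c α = lam) (hγ : trigSum N c γ = lam) (θ : ℝ) :
    ∑ l ∈ Finset.range (2 * N + 1), symC N c lam l * Complex.exp (Complex.I * θ) ^ l =
      (Complex.exp (Complex.I * θ) - Complex.exp (Complex.I * α)) *
      (Complex.exp (Complex.I * θ) - Complex.exp (Complex.I * γ)) *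
        evC (quotPoly N c lam α γ) θ := by
  have hz : ∀ τ : ℝ, trigSum N c τ = lam → ∑ l ∈ Finset.range (2 * N + 1),
      symC N c lam l * Complex.exp (Complex.I * τ) ^ l = 0 := by
    intro τ hτ
    have := exp_neg_mul_sum_symC N c lam τ
    rw [hτ, sub_self] at this
    exact (mul_eq_zero.1 this.symm).resolve_left (Complex.exp_ne_zero _)
  have h1 := hz α hα
  have h2 := hz γ hγ
  have hev : evC (quotPoly N c lam α γ) θ = ∑ l ∈ Finset.range (2 * N + 1), symC N c lam l *
    ∑ i ∈ Finset.range l, Complex.exp (Complex.I * α) ^ (l - 1 - i) *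
      ∑ k ∈ Finset.range i, Complex.exp (Complex.I * θ) ^ k *
        Complex.exp (Complex.I * γ) ^ (i - 1 - k) := by
    simp only [evC, quotPoly, Polynomial.eval_finsetSum, Polynomial.eval_mul, Polynomial.eval_C,
      Polynomial.eval_pow, Polynomial.eval_X]
    refine Finset.sum_congr rfl fun l _ => ?_
    congr 1
    refine Finset.sum_congr rfl fun i _ => ?_
    congr 1
    exact Finset.sum_congr rfl fun k _ => mul_comm _ _
  rw [hev]
  clear hev hz
  generalize Complex.exp (Complex.I * α) = t₁ at *
  generalize Complex.exp (Complex.I * γ) = t₂ at *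
  generalize Complex.exp (Complex.I * θ) = t at *
  -- first divided difference
  have d1 : ∀ s : ℂ, ∑ l ∈ Finset.range (2 * N + 1), symC N c lam l * s ^ l =
      (∑ l ∈ Finset.range (2 * N + 1), symC N c lam l *
        ∑ i ∈ Finset.range l, s ^ i * t₁ ^ (l - 1 - i)) * (s - t₁) := by
    intro s
    rw [← sub_zero (∑ l ∈ Finset.range (2 * N + 1), symC N c lam l * s ^ l), ← h1,
      ← Finset.sum_sub_distrib, Finset.sum_mul]
    refine Finset.sum_congr rfl fun l _ => ?_
    rw [mul_assoc, geom_sum₂_mul]; ring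
  have h3 : ∑ l ∈ Finset.range (2 * N + 1), symC N c lam l *
        ∑ i ∈ Finset.range l, t₂ ^ i * t₁ ^ (l - 1 - i) = 0 := by
    rw [d1] at h2
    exact (mul_eq_zero.1 h2).resolve_right (sub_ne_zero.2 hne.symm)
  rw [d1 t, ← sub_zero (∑ l ∈ Finset.range (2 * N + 1), symC N c lam l *
        ∑ i ∈ Finset.range l, t ^ i * t₁ ^ (l - 1 - i)), ← h3, ← Finset.sum_sub_distrib]
  rw [mul_comm, mul_assoc]
  congr 1
  rw [Finset.mul_sum]
  refine Finset.sum_congr rfl fun l _ => ?_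
  rw [← mul_sub, mul_left_comm, ← Finset.sum_sub_distrib]
  congr 1
  rw [Finset.mul_sum]
  refine Finset.sum_congr rfl fun i _ => ?_
  rw [← sub_mul, ← geom_sum₂_mul]; ring

lemma quotPoly_degree (N : ℕ) (c : ℤ → ℂ) (lam α γ : ℝ) :
    (quotPoly N c lam α γ).degree < ((2 * N : ℕ) : WithBot ℕ) := by
  rw [← Polynomial.mem_degreeLT]
  unfold quotPoly
  simp only [← Polynomial.smul_eq_C_mul]
  refine Submodule.sum_mem (Polynomial.degreeLT ℂ (2 * N)) fun l hl => Submodule.smul_mem _ _ ?_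
  refine Submodule.sum_mem (Polynomial.degreeLT ℂ (2 * N)) fun i hi => Submodule.smul_mem _ _ ?_
  refine Submodule.sum_mem (Polynomial.degreeLT ℂ (2 * N)) fun k hk => Submodule.smul_mem _ _ ?_
  rw [Polynomial.mem_degreeLT, Polynomial.degree_X_pow]
  simp only [Finset.mem_range] at hl hi hk
  exact_mod_cast (by omega : k < 2 * N)

lemma trigSum_cofC (N : ℕ) (c : ℤ → ℂ) (lam α γ θ : ℝ) :
    trigSum N (cofC N c lam α γ) θ = Complex.exp (Complex.I * (((α + γ) / 2 : ℝ) : ℂ)) *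
      (Complex.exp (Complex.I * (1 - N) * θ) * evC (quotPoly N c lam α γ) θ) := by
  rw [evC_eq_sum (quotPoly_degree N c lam α γ)]
  simp only [trigSum, cofC, Finset.mul_sum, mul_ite, mul_zero, ite_mul, zero_mul]
  rw [← Finset.sum_filter]
  refine Finset.sum_bij' (fun l _ => (l + N - 1).toNat) (fun l _ => (l : ℤ) - N + 1) ?_ ?_ ?_ ?_ ?_
  · intro l hl; rw [Finset.mem_filter, Finset.mem_Icc] at hl; rw [Finset.mem_range]; omega
  · intro l hl; rw [Finset.mem_range] at hl; rw [Finset.mem_filter, Finset.mem_Icc]; omega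
  · intro l hl; rw [Finset.mem_filter, Finset.mem_Icc] at hl; omega
  · intro l hl; omega
  · intro l hl
    rw [Finset.mem_filter, Finset.mem_Icc] at hl
    obtain ⟨k, hk⟩ : ∃ k : ℕ, l + N - 1 = k := ⟨(l + N - 1).toNat, by omega⟩
    have hl' : l = (k : ℤ) - N + 1 := by omega
    rw [hk, hl', Int.toNat_natCast, mul_left_comm _ _ (Complex.exp (Complex.I * ((k : ℤ) : ℂ) * θ)),
      ← Complex.exp_add, mul_assoc]
    congr 3; push_cast; ring

lemma exp_sub_exp (θ α : ℝ) : Complex.exp (Complex.I * θ) - Complex.exp (Complex.I * α) =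
    Complex.exp (Complex.I * (((θ + α) / 2 : ℝ) : ℂ)) * (2 * Complex.I *
      (Real.sin ((θ - α) / 2) : ℂ)) := by
  have h1 : Complex.I * θ = Complex.I * (((θ + α) / 2 : ℝ) : ℂ) +
    (((θ - α) / 2 : ℝ) : ℂ) * Complex.I := by push_cast; ring
  have h2 : Complex.I * α = Complex.I * (((θ + α) / 2 : ℝ) : ℂ) +
    (-(((θ - α) / 2 : ℝ) : ℂ)) * Complex.I := by push_cast; ring
  rw [h1, h2, Complex.exp_add, Complex.exp_add, Complex.exp_mul_I, Complex.exp_mul_I,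
    Complex.cos_neg, Complex.sin_neg, Complex.ofReal_sin]
  ring

/-- The real factor of `(t - e^{iα}) (t - e^{iγ})`. -/
noncomputable def sinFac (α γ θ : ℝ) : ℝ := 4 * (Real.sin ((θ - α) / 2) * Real.sin ((γ - θ) / 2))

lemma evC_twoRoots (α γ θ : ℝ) : evC (twoRoots α γ) θ =
    Complex.exp (Complex.I * (((α + γ) / 2 : ℝ) : ℂ)) * (Complex.exp (Complex.I * θ) *
      sinFac α γ θ) := by
  have : evC (twoRoots α γ) θ = (Complex.exp (Complex.I * θ) - Complex.exp (Complex.I * α)) *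
      (Complex.exp (Complex.I * θ) - Complex.exp (Complex.I * γ)) := by
    simp [evC, twoRoots]
  rw [this, exp_sub_exp, exp_sub_exp, sinFac, ← neg_sub γ θ, neg_div, Real.sin_neg]
  have e : Complex.exp (Complex.I * (((α + γ) / 2 : ℝ) : ℂ)) * Complex.exp (Complex.I * θ) =
      Complex.exp (Complex.I * (((θ + α) / 2 : ℝ) : ℂ)) *
      Complex.exp (Complex.I * (((θ + γ) / 2 : ℝ) : ℂ)) := by
    rw [← Complex.exp_add, ← Complex.exp_add]; congr 1; push_cast; ring
  push_cast at e ⊢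
  linear_combination (-4 * Complex.sin ((θ - α) / 2) * Complex.sin ((γ - θ) / 2)) * e -
    4 * Complex.exp (Complex.I * ((θ + α) / 2)) * Complex.exp (Complex.I * ((θ + γ) / 2)) *
    Complex.sin ((θ - α) / 2) * Complex.sin ((γ - θ) / 2) * Complex.I_sq

lemma trigSum_sub_eq {N : ℕ} {c : ℤ → ℂ} {lam α γ : ℝ}
    (hne : Complex.exp (Complex.I * α) ≠ Complex.exp (Complex.I * γ))
    (hα : trigSum N c α = lam) (hγ : trigSum N c γ = lam) (θ : ℝ) :
    trigSum N c θ - lam = sinFac α γ θ * trigSum N (cofC N c lam α γ) θ := by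
  have h : evC (twoRoots α γ) θ = (Complex.exp (Complex.I * θ) - Complex.exp (Complex.I * α)) *
      (Complex.exp (Complex.I * θ) - Complex.exp (Complex.I * γ)) := by
    simp [evC, twoRoots]
  rw [exp_neg_mul_sum_symC, sum_symC_eq hne hα hγ, trigSum_cofC, ← h, evC_twoRoots]
  have e : Complex.exp (-Complex.I * N * θ) * Complex.exp (Complex.I * θ) =
      Complex.exp (Complex.I * (1 - N) * θ) := by
    rw [← Complex.exp_add]; congr 1; ring
  rw [← e]; ring

/-- In terms of Fourier coefficients, `T_n(f) - lam` acts on `V` as the section of the cofactor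
acts on `twoRoots * V`, up to a shift of the index and a unimodular constant. -/
lemma fourierCoeff'_sub_eq {N : ℕ} {c : ℤ → ℂ} {lam α γ : ℝ}
    (hne : Complex.exp (Complex.I * α) ≠ Complex.exp (Complex.I * γ))
    (hα : trigSum N c α = lam) (hγ : trigSum N c γ = lam) (V : Polynomial ℂ) (j : ℤ) :
    Complex.exp (Complex.I * (((α + γ) / 2 : ℝ) : ℂ)) *
      fourierCoeff' (fun θ => (trigSum N c θ - lam) * evC V θ) j =
    fourierCoeff' (fun θ => trigSum N (cofC N c lam α γ) θ * evC (twoRoots α γ * V) θ) (j + 1) := by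
  rw [fourierCoeff'_eq, fourierCoeff'_eq, ← circMean_const_mul]
  congr 1; funext θ
  have h : evC (twoRoots α γ * V) θ = evC (twoRoots α γ) θ * evC V θ := by simp [evC]
  rw [trigSum_sub_eq hne hα hγ, h, evC_twoRoots]
  have e : Complex.exp (-Complex.I * j * θ) = Complex.exp (-Complex.I * ((j + 1 : ℤ) : ℂ) * θ) *
      Complex.exp (Complex.I * θ) := by
    rw [← Complex.exp_add]; congr 1; push_cast; ring
  rw [e]; ring

/-! ### The two branches of the inverse of the symbol -/

/-- The symbol `f` is a real trigonometric polynomial with coefficients `c`, increasing on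
`[0, θ₀]` and decreasing on `[θ₀, 2π]`, and `θ₁`, `θ₂` invert it on these two intervals. -/
structure Unimodal (f : ℝ → ℝ) (N : ℕ) (c : ℤ → ℂ) (θ₀ : ℝ) (θ₁ θ₂ : ℝ → ℝ) : Prop where
  trig : ∀ θ : ℝ, (f θ : ℂ) = trigSum N c θ
  mem : θ₀ ∈ Set.Ioo 0 (2 * Real.pi)
  up : ∀ θ ∈ Set.Ioo 0 θ₀, 0 < deriv f θ
  down : ∀ θ ∈ Set.Ioo θ₀ (2 * Real.pi), deriv f θ < 0
  br₁ : ∀ lam ∈ Set.Ioo (f 0) (f θ₀), θ₁ lam ∈ Set.Ioo 0 θ₀ ∧ f (θ₁ lam) = lam ∧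
      ∀ θ ∈ Set.Ioo 0 θ₀, f θ = lam → θ = θ₁ lam
  br₂ : ∀ lam ∈ Set.Ioo (f 0) (f θ₀), θ₂ lam ∈ Set.Ioo θ₀ (2 * Real.pi) ∧
      f (θ₂ lam) = lam ∧ ∀ θ ∈ Set.Ioo θ₀ (2 * Real.pi), f θ = lam → θ = θ₂ lam

/-- The function `ψ` of the theorem. -/
noncomputable def psiFn (θ₁ θ₂ : ℝ → ℝ) (l : ℝ) : ℝ := (θ₁ l - θ₂ l) / 2 + Real.pi

lemma trigSum_periodic (N : ℕ) (c : ℤ → ℂ) : Function.Periodic (trigSum N c) (2 * Real.pi) := by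
  intro θ
  unfold trigSum
  refine Finset.sum_congr rfl fun l _ => ?_
  congr 1
  rw [Complex.exp_eq_exp_iff_exists_int]
  exact ⟨l, by push_cast; ring⟩

lemma contDiff_trigSum (N : ℕ) (c : ℤ → ℂ) : ContDiff ℝ 1 (trigSum N c) := by
  unfold trigSum
  refine ContDiff.sum fun l _ => ?_
  refine contDiff_const.mul (ContDiff.cexp ?_)
  exact contDiff_const.mul Complex.ofRealCLM.contDiff

namespace Unimodal

variable {f : ℝ → ℝ} {N : ℕ} {c : ℤ → ℂ} {θ₀ : ℝ} {θ₁ θ₂ : ℝ → ℝ}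

lemma contDiff (h : Unimodal f N c θ₀ θ₁ θ₂) : ContDiff ℝ 1 f := by
  have : f = fun θ => Complex.reCLM (trigSum N c θ) := by
    funext θ; rw [← h.trig]; simp
  rw [this]
  exact Complex.reCLM.contDiff.comp (contDiff_trigSum N c)

lemma continuous (h : Unimodal f N c θ₀ θ₁ θ₂) : Continuous f := h.contDiff.continuous

lemma hasDerivAt (h : Unimodal f N c θ₀ θ₁ θ₂) (θ : ℝ) : HasDerivAt f (deriv f θ) θ :=
  ((h.contDiff.differentiable (by simp)) θ).hasDerivAt

lemma apply_two_pi (h : Unimodal f N c θ₀ θ₁ θ₂) : f (2 * Real.pi) = f 0 := by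
  have := trigSum_periodic N c 0
  rw [← h.trig, ← h.trig, zero_add] at this
  exact_mod_cast this

lemma strictMonoOn (h : Unimodal f N c θ₀ θ₁ θ₂) : StrictMonoOn f (Set.Icc 0 θ₀) :=
  strictMonoOn_of_deriv_pos (convex_Icc _ _) h.continuous.continuousOn (by
    rw [interior_Icc]; exact h.up)

lemma strictAntiOn (h : Unimodal f N c θ₀ θ₁ θ₂) : StrictAntiOn f (Set.Icc θ₀ (2 * Real.pi)) :=
  strictAntiOn_of_deriv_neg (convex_Icc _ _) h.continuous.continuousOn (by
    rw [interior_Icc]; exact h.down)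

lemma lt (h : Unimodal f N c θ₀ θ₁ θ₂) : f 0 < f θ₀ :=
  h.strictMonoOn ⟨le_rfl, h.mem.1.le⟩ ⟨h.mem.1.le, le_rfl⟩ h.mem.1

/-- A right inverse of `f` on an open interval with `f' ≠ 0` is continuously differentiable. -/
lemma contDiffAt_branch (h : Unimodal f N c θ₀ θ₁ θ₂) {J : Set ℝ} (hJ : IsOpen J) {g : ℝ → ℝ}
    {U : Set ℝ} (hU : IsOpen U)
    (hg : ∀ lam ∈ U, g lam ∈ J ∧ f (g lam) = lam ∧ ∀ θ ∈ J, f θ = lam → θ = g lam)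
    (hd : ∀ θ ∈ J, deriv f θ ≠ 0) {lam : ℝ} (hl : lam ∈ U) : ContDiffAt ℝ 1 g lam := by
  obtain ⟨hgJ, hfg, -⟩ := hg lam hl
  have hcd : ContDiffAt ℝ 1 f (g lam) := h.contDiff.contDiffAt
  let f' : ℝ ≃L[ℝ] ℝ := ContinuousLinearEquiv.unitsEquivAut ℝ (Units.mk0 _ (hd _ hgJ))
  have hf' : HasFDerivAt f (f' : ℝ →L[ℝ] ℝ) (g lam) := by
    have := (h.hasDerivAt (g lam)).hasFDerivAt
    have e : (f' : ℝ →L[ℝ] ℝ) = ContinuousLinearMap.toSpanSingleton ℝ (deriv f (g lam)) := by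
      ext; simp [f']
    rw [e]; exact this
  have h1 := hcd.to_localInverse hf' (by simp)
  rw [hfg] at h1
  have hs : HasStrictFDerivAt f (f' : ℝ →L[ℝ] ℝ) (g lam) := hcd.hasStrictFDerivAt' hf' (by simp)
  have h2 := hs.eventually_right_inverse
  have h3 : hs.localInverse f f' (g lam) (f (g lam)) = g lam := hs.localInverse_apply_image
  have h4 := hs.localInverse_continuousAt
  rw [hfg] at h2 h3 h4
  refine h1.congr_of_eventuallyEq ?_
  have h5 : ∀ᶠ y in 𝓝 lam, hs.localInverse f f' (g lam) y ∈ J :=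
    h4.eventually (by rw [h3]; exact hJ.mem_nhds hgJ)
  filter_upwards [h2, h5, hU.mem_nhds hl] with y hy1 hy2 hy3
  exact ((hg y hy3).2.2 _ hy2 hy1).symm

lemma contDiffAt₁ (h : Unimodal f N c θ₀ θ₁ θ₂) {lam : ℝ} (hl : lam ∈ Set.Ioo (f 0) (f θ₀)) :
    ContDiffAt ℝ 1 θ₁ lam :=
  h.contDiffAt_branch isOpen_Ioo isOpen_Ioo h.br₁ (fun θ hθ => (h.up θ hθ).ne') hl

lemma contDiffAt₂ (h : Unimodal f N c θ₀ θ₁ θ₂) {lam : ℝ} (hl : lam ∈ Set.Ioo (f 0) (f θ₀)) :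
    ContDiffAt ℝ 1 θ₂ lam :=
  h.contDiffAt_branch isOpen_Ioo isOpen_Ioo h.br₂ (fun θ hθ => (h.down θ hθ).ne) hl

lemma hasDerivAt_branch (h : Unimodal f N c θ₀ θ₁ θ₂) {g : ℝ → ℝ} {lam : ℝ}
    (hg : ContDiffAt ℝ 1 g lam) (hfg : ∀ᶠ y in 𝓝 lam, f (g y) = y) :
    deriv f (g lam) * deriv g lam = 1 := by
  have h1 := (hg.differentiableAt (by simp)).hasDerivAt
  have h2 := (h.hasDerivAt (g lam)).comp lam h1
  exact h2.unique ((hasDerivAt_id lam).congr_of_eventuallyEq hfg)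

lemma contDiffAt_psi (h : Unimodal f N c θ₀ θ₁ θ₂) {lam : ℝ} (hl : lam ∈ Set.Ioo (f 0) (f θ₀)) :
    ContDiffAt ℝ 1 (psiFn θ₁ θ₂) lam := by
  unfold psiFn
  exact (((h.contDiffAt₁ hl).sub (h.contDiffAt₂ hl)).div_const 2).add contDiffAt_const

lemma deriv_psi_pos (h : Unimodal f N c θ₀ θ₁ θ₂) {lam : ℝ} (hl : lam ∈ Set.Ioo (f 0) (f θ₀)) :
    0 < deriv (psiFn θ₁ θ₂) lam := by
  have d1 := h.contDiffAt₁ hl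
  have d2 := h.contDiffAt₂ hl
  have e1 := h.hasDerivAt_branch d1 (by
    filter_upwards [isOpen_Ioo.mem_nhds hl] with y hy using (h.br₁ y hy).2.1)
  have e2 := h.hasDerivAt_branch d2 (by
    filter_upwards [isOpen_Ioo.mem_nhds hl] with y hy using (h.br₂ y hy).2.1)
  have p1 := h.up _ (h.br₁ lam hl).1
  have p2 := h.down _ (h.br₂ lam hl).1
  have q1 : 0 < deriv θ₁ lam := by
    by_contra hc; nlinarith [mul_nonneg p1.le (not_lt.1 hc |> neg_nonneg.2)]
  have q2 : deriv θ₂ lam < 0 := by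
    by_contra hc; nlinarith [mul_nonneg (neg_nonneg.2 p2.le) (not_lt.1 hc)]
  have : HasDerivAt (psiFn θ₁ θ₂) ((deriv θ₁ lam - deriv θ₂ lam) / 2) lam :=
    ((((d1.differentiableAt (by simp)).hasDerivAt.sub
      (d2.differentiableAt (by simp)).hasDerivAt).div_const 2).add_const _)
  rw [this.deriv]; linarith

lemma strictMonoOn_psi (h : Unimodal f N c θ₀ θ₁ θ₂) :
    StrictMonoOn (psiFn θ₁ θ₂) (Set.Ioo (f 0) (f θ₀)) :=
  strictMonoOn_of_deriv_pos (convex_Ioo _ _)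
    (fun _ hl => (h.contDiffAt_psi hl).continuousAt.continuousWithinAt)
    (by rw [interior_Ioo]; exact fun _ hl => h.deriv_psi_pos hl)

/-- `ψ` tends to `0` at the minimum `f 0`. -/
lemma exists_psi_lt (h : Unimodal f N c θ₀ θ₁ θ₂) {ε : ℝ} (hε : 0 < ε) :
    ∃ a ∈ Set.Ioo (f 0) (f θ₀), ∀ lam ∈ Set.Ioo (f 0) a, psiFn θ₁ θ₂ lam < ε := by
  obtain ⟨hm1, hm2⟩ := h.mem
  set η₁ := min (ε / 2) (θ₀ / 2) with hη₁
  set η₂ := max (2 * Real.pi - ε / 2) ((θ₀ + 2 * Real.pi) / 2) with hη₂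
  have a1 : 0 < η₁ := lt_min (by linarith) (by linarith)
  have a2 : η₁ < θ₀ := (min_le_right _ _).trans_lt (by linarith)
  have b1 : η₂ < 2 * Real.pi := max_lt (by linarith) (by linarith)
  have b2 : θ₀ < η₂ := lt_of_lt_of_le (by linarith) (le_max_right _ _)
  have f1 : f 0 < f η₁ := h.strictMonoOn ⟨le_rfl, hm1.le⟩ ⟨a1.le, a2.le⟩ a1
  have f2 : f η₁ < f θ₀ := h.strictMonoOn ⟨a1.le, a2.le⟩ ⟨hm1.le, le_rfl⟩ a2
  have f3 : f 0 < f η₂ := by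
    rw [← h.apply_two_pi]; exact h.strictAntiOn ⟨b2.le, b1.le⟩ ⟨hm2.le, le_rfl⟩ b1
  refine ⟨min (f η₁) (f η₂), ⟨lt_min f1 f3, (min_le_left _ _).trans_lt f2⟩, fun lam hlam => ?_⟩
  have l1 := hlam.2.trans_le (min_le_left _ _)
  have l2 := hlam.2.trans_le (min_le_right _ _)
  have hl : lam ∈ Set.Ioo (f 0) (f θ₀) := ⟨hlam.1, l1.trans f2⟩
  obtain ⟨m1, e1, -⟩ := h.br₁ lam hl
  obtain ⟨m2, e2, -⟩ := h.br₂ lam hl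
  have g1 : θ₁ lam < η₁ := by
    rw [← h.strictMonoOn.lt_iff_lt ⟨m1.1.le, m1.2.le⟩ ⟨a1.le, a2.le⟩, e1]; exact l1
  have g2 : η₂ < θ₂ lam := by
    rw [← h.strictAntiOn.lt_iff_gt ⟨m2.1.le, m2.2.le⟩ ⟨b2.le, b1.le⟩, e2]; exact l2
  have := min_le_left (ε / 2) (θ₀ / 2)
  have := le_max_left (2 * Real.pi - ε / 2) ((θ₀ + 2 * Real.pi) / 2)
  unfold psiFn
  linarith

/-- `ψ` tends to `π` at the maximum `f θ₀`. -/
lemma exists_lt_psi (h : Unimodal f N c θ₀ θ₁ θ₂) {ε : ℝ} (hε : 0 < ε) :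
    ∃ a ∈ Set.Ioo (f 0) (f θ₀), ∀ lam ∈ Set.Ioo a (f θ₀), Real.pi - ε < psiFn θ₁ θ₂ lam := by
  obtain ⟨hm1, hm2⟩ := h.mem
  set η₁ := max (θ₀ - ε / 2) (θ₀ / 2) with hη₁
  set η₂ := min (θ₀ + ε / 2) ((θ₀ + 2 * Real.pi) / 2) with hη₂
  have a1 : η₁ < θ₀ := max_lt (by linarith) (by linarith)
  have a2 : 0 < η₁ := lt_of_lt_of_le (by linarith) (le_max_right _ _)
  have b1 : θ₀ < η₂ := lt_min (by linarith) (by linarith)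
  have b2 : η₂ < 2 * Real.pi := (min_le_right _ _).trans_lt (by linarith)
  have f1 : f 0 < f η₁ := h.strictMonoOn ⟨le_rfl, hm1.le⟩ ⟨a2.le, a1.le⟩ a2
  have f2 : f η₁ < f θ₀ := h.strictMonoOn ⟨a2.le, a1.le⟩ ⟨hm1.le, le_rfl⟩ a1
  have f3 : f η₂ < f θ₀ := h.strictAntiOn ⟨le_rfl, hm2.le⟩ ⟨b1.le, b2.le⟩ b1
  refine ⟨max (f η₁) (f η₂), ⟨f1.trans_le (le_max_left _ _), max_lt f2 f3⟩, fun lam hlam => ?_⟩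
  have l1 := (le_max_left _ _).trans_lt hlam.1
  have l2 := (le_max_right _ _).trans_lt hlam.1
  have hl : lam ∈ Set.Ioo (f 0) (f θ₀) := ⟨f1.trans l1, hlam.2⟩
  obtain ⟨m1, e1, -⟩ := h.br₁ lam hl
  obtain ⟨m2, e2, -⟩ := h.br₂ lam hl
  have g1 : η₁ < θ₁ lam := by
    rw [← h.strictMonoOn.lt_iff_lt ⟨a2.le, a1.le⟩ ⟨m1.1.le, m1.2.le⟩, e1]; exact l1
  have g2 : θ₂ lam < η₂ := by
    rw [← h.strictAntiOn.lt_iff_gt ⟨b1.le, b2.le⟩ ⟨m2.1.le, m2.2.le⟩, e2]; exact l2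
  have := le_max_left (θ₀ - ε / 2) (θ₀ / 2)
  have := min_le_left (θ₀ + ε / 2) ((θ₀ + 2 * Real.pi) / 2)
  unfold psiFn
  linarith

lemma exists_psi_eq (h : Unimodal f N c θ₀ θ₁ θ₂) {y : ℝ} (hy : y ∈ Set.Ioo 0 Real.pi) :
    ∃ lam ∈ Set.Ioo (f 0) (f θ₀), psiFn θ₁ θ₂ lam = y := by
  obtain ⟨a, ha, ha'⟩ := h.exists_psi_lt hy.1
  obtain ⟨b, hb, hb'⟩ := h.exists_lt_psi (sub_pos.2 hy.2)
  obtain ⟨a', h1, h2⟩ := exists_between ha.1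
  obtain ⟨b', h3, h4⟩ := exists_between hb.2
  have e1 := ha' a' ⟨h1, h2⟩
  have e2 := hb' b' ⟨h3, h4⟩
  have ma : a' ∈ Set.Ioo (f 0) (f θ₀) := ⟨h1, h2.trans ha.2⟩
  have mb : b' ∈ Set.Ioo (f 0) (f θ₀) := ⟨hb.1.trans h3, h4⟩
  have hab : a' < b' := by
    rw [← h.strictMonoOn_psi.lt_iff_lt ma mb]; linarith
  have hsub : Set.Icc a' b' ⊆ Set.Ioo (f 0) (f θ₀) := fun z hz =>
    ⟨ma.1.trans_le hz.1, hz.2.trans_lt mb.2⟩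
  obtain ⟨l, hl, hle⟩ := intermediate_value_Icc hab.le (f := psiFn θ₁ θ₂)
    (fun z hz => (h.contDiffAt_psi (hsub hz)).continuousAt.continuousWithinAt)
    (show y ∈ _ from ⟨e1.le, by linarith⟩)
  exact ⟨l, hsub hl, hle⟩

/-! ### The positive cofactor -/

lemma exp_ne (h : Unimodal f N c θ₀ θ₁ θ₂) {lam : ℝ} (hl : lam ∈ Set.Ioo (f 0) (f θ₀)) :
    Complex.exp (Complex.I * (θ₁ lam)) ≠ Complex.exp (Complex.I * (θ₂ lam)) := by
  obtain ⟨m1, -⟩ := h.br₁ lam hl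
  obtain ⟨m2, -⟩ := h.br₂ lam hl
  intro he
  have h1 := exp_sub_exp (θ₂ lam) (θ₁ lam)
  rw [he, sub_self] at h1
  have h2 : Real.sin ((θ₂ lam - θ₁ lam) / 2) = 0 := by
    have := (mul_eq_zero.1 h1.symm).resolve_left (Complex.exp_ne_zero _)
    simpa [-Complex.ofReal_sin] using this
  have h3 := Real.sin_pos_of_pos_of_lt_pi (x := (θ₂ lam - θ₁ lam) / 2)
    (by linarith [m1.2, m2.1]) (by linarith [m1.1, m2.2])
  exact h3.ne' h2

lemma trig₁ (h : Unimodal f N c θ₀ θ₁ θ₂) {lam : ℝ} (hl : lam ∈ Set.Ioo (f 0) (f θ₀)) :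
    trigSum N c (θ₁ lam) = lam := by rw [← h.trig, (h.br₁ lam hl).2.1]

lemma trig₂ (h : Unimodal f N c θ₀ θ₁ θ₂) {lam : ℝ} (hl : lam ∈ Set.Ioo (f 0) (f θ₀)) :
    trigSum N c (θ₂ lam) = lam := by rw [← h.trig, (h.br₂ lam hl).2.1]

/-- At a zero of `sinFac` the cofactor is obtained by differentiating the factorization. -/
lemma deriv_eq (h : Unimodal f N c θ₀ θ₁ θ₂) {lam : ℝ} (hl : lam ∈ Set.Ioo (f 0) (f θ₀))
    {θ s' : ℝ} (hs : HasDerivAt (sinFac (θ₁ lam) (θ₂ lam)) s' θ)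
    (h0 : sinFac (θ₁ lam) (θ₂ lam) θ = 0) :
    ((deriv f θ : ℝ) : ℂ) = s' * trigSum N (cofC N c lam (θ₁ lam) (θ₂ lam)) θ := by
  have e : (fun θ => ((f θ : ℝ) : ℂ) - lam) = fun θ => ((sinFac (θ₁ lam) (θ₂ lam) θ : ℝ) : ℂ) *
      trigSum N (cofC N c lam (θ₁ lam) (θ₂ lam)) θ := by
    funext θ
    rw [h.trig]; exact trigSum_sub_eq (h.exp_ne hl) (h.trig₁ hl) (h.trig₂ hl) θ
  have d1 : HasDerivAt (fun θ => ((f θ : ℝ) : ℂ) - lam) ((deriv f θ : ℝ) : ℂ) θ :=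
    (h.hasDerivAt θ).ofReal_comp.sub_const _
  have d2 := hs.ofReal_comp.mul (((contDiff_trigSum N
    (cofC N c lam (θ₁ lam) (θ₂ lam))).differentiable (by simp)) θ).hasDerivAt
  rw [e] at d1
  have := d1.unique d2
  rw [this, h0]; simp

lemma hasDerivAt_sinFac (α γ θ : ℝ) : HasDerivAt (sinFac α γ)
    (4 * (Real.cos ((θ - α) / 2) * 2⁻¹ * Real.sin ((γ - θ) / 2) +
      Real.sin ((θ - α) / 2) * (Real.cos ((γ - θ) / 2) * (-2⁻¹)))) θ := by
  have d1 : HasDerivAt (fun θ : ℝ => (θ - α) / 2) (2⁻¹) θ := by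
    simpa using ((hasDerivAt_id θ).sub_const α).div_const 2
  have d2 : HasDerivAt (fun θ : ℝ => (γ - θ) / 2) (-2⁻¹) θ := by
    have := ((hasDerivAt_id θ).const_sub γ).div_const 2
    simpa [neg_div] using this
  exact (d1.sin.mul d2.sin).const_mul 4

lemma cof_pos_of_mem (h : Unimodal f N c θ₀ θ₁ θ₂) {lam : ℝ} (hl : lam ∈ Set.Ioo (f 0) (f θ₀))
    {θ : ℝ} (hθ : θ ∈ Set.Ico 0 (2 * Real.pi)) :
    ∃ r : ℝ, 0 < r ∧ trigSum N (cofC N c lam (θ₁ lam) (θ₂ lam)) θ = r := by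
  obtain ⟨m1, e1, -⟩ := h.br₁ lam hl
  obtain ⟨m2, e2, -⟩ := h.br₂ lam hl
  obtain ⟨hm1, hm2⟩ := h.mem
  have hfac := trigSum_sub_eq (h.exp_ne hl) (h.trig₁ hl) (h.trig₂ hl) θ
  rw [← h.trig] at hfac
  set α := θ₁ lam
  set γ := θ₂ lam
  have hspos : 0 < Real.sin ((γ - α) / 2) := Real.sin_pos_of_pos_of_lt_pi
    (by linarith [m1.2, m2.1]) (by linarith [m1.1, m2.2])
  have off : 0 < (f θ - lam) * sinFac α γ θ →
      ∃ r : ℝ, 0 < r ∧ trigSum N (cofC N c lam α γ) θ = r := by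
    intro hp
    have hs : sinFac α γ θ ≠ 0 := by intro h0; rw [h0, mul_zero] at hp; exact lt_irrefl _ hp
    refine ⟨(f θ - lam) / sinFac α γ θ, ?_, ?_⟩
    · have : (f θ - lam) / sinFac α γ θ = (f θ - lam) * sinFac α γ θ / (sinFac α γ θ) ^ 2 := by
        field_simp
      rw [this]; exact div_pos hp (by positivity)
    · have hs' : (sinFac α γ θ : ℂ) ≠ 0 := by exact_mod_cast hs
      push_cast
      rw [eq_div_iff hs', hfac]; ring
  have zero : ∀ s' : ℝ, HasDerivAt (sinFac α γ) s' θ → sinFac α γ θ = 0 →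
      0 < deriv f θ * s' → ∃ r : ℝ, 0 < r ∧ trigSum N (cofC N c lam α γ) θ = r := by
    intro s' hs' h0 hp
    have hne : s' ≠ 0 := by intro h0; rw [h0, mul_zero] at hp; exact lt_irrefl _ hp
    have e := h.deriv_eq hl hs' h0
    refine ⟨deriv f θ / s', ?_, ?_⟩
    · have : deriv f θ / s' = deriv f θ * s' / s' ^ 2 := by field_simp
      rw [this]; exact div_pos hp (by positivity)
    · have : (s' : ℂ) ≠ 0 := by exact_mod_cast hne
      push_cast
      rw [eq_div_iff this, e]; ring
  have hup := h.strictMonoOn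
  have hdn := h.strictAntiOn
  rcases lt_trichotomy θ α with hc | hc | hc
  · apply off
    have a1 : f θ < lam := by
      rw [← e1]; exact hup ⟨hθ.1, (hc.trans m1.2).le⟩ ⟨m1.1.le, m1.2.le⟩ hc
    have a2 : Real.sin ((θ - α) / 2) < 0 := Real.sin_neg_of_neg_of_neg_pi_lt (by linarith)
      (by linarith [hθ.1, m1.2])
    have a3 : 0 < Real.sin ((γ - θ) / 2) := Real.sin_pos_of_pos_of_lt_pi
      (by linarith [m1.2, m2.1]) (by linarith [hθ.1, m2.2])
    unfold sinFac
    nlinarith [mul_pos (mul_pos (sub_pos.2 a1) (neg_pos.2 a2)) a3]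
  · apply zero _ (hasDerivAt_sinFac α γ θ)
    · rw [hc]; simp [sinFac]
    · rw [hc]
      have := h.up α m1
      simp
      positivity
  · rcases lt_trichotomy θ γ with hd | hd | hd
    · apply off
      have a1 : lam < f θ := by
        rcases le_total θ θ₀ with h' | h'
        · rw [← e1]; exact hup ⟨m1.1.le, m1.2.le⟩ ⟨hθ.1, h'⟩ hc
        · rw [← e2]; exact hdn ⟨h', hθ.2.le⟩ ⟨m2.1.le, m2.2.le⟩ hd
      have a2 : 0 < Real.sin ((θ - α) / 2) := Real.sin_pos_of_pos_of_lt_pi (by linarith)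
        (by linarith [hθ.2, m1.1])
      have a3 : 0 < Real.sin ((γ - θ) / 2) := Real.sin_pos_of_pos_of_lt_pi
        (by linarith) (by linarith [hθ.1, m2.2])
      have := sub_pos.2 a1
      unfold sinFac
      positivity
    · apply zero _ (hasDerivAt_sinFac α γ θ)
      · rw [hd]; simp [sinFac]
      · rw [hd]
        have := h.down γ m2
        simp
        exact mul_neg_of_neg_of_pos this (by linarith)
    · apply off
      have a1 : f θ < lam := by
        rw [← e2]; exact hdn ⟨m2.1.le, m2.2.le⟩ ⟨(m2.1.trans hd).le, hθ.2.le⟩ hd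
      have a2 : 0 < Real.sin ((θ - α) / 2) := Real.sin_pos_of_pos_of_lt_pi (by linarith)
        (by linarith [hθ.2, m1.1])
      have a3 : Real.sin ((γ - θ) / 2) < 0 := Real.sin_neg_of_neg_of_neg_pi_lt (by linarith)
        (by linarith [hθ.2, m2.1])
      unfold sinFac
      nlinarith [mul_pos (mul_pos (sub_pos.2 a1) (neg_pos.2 a3)) a2]

/-- The positive function `b` with `f - lam = sinFac * b`. -/
noncomputable def cof (N : ℕ) (c : ℤ → ℂ) (θ₁ θ₂ : ℝ → ℝ) (lam θ : ℝ) : ℝ :=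
  (trigSum N (cofC N c lam (θ₁ lam) (θ₂ lam)) θ).re

lemma cof_spec (h : Unimodal f N c θ₀ θ₁ θ₂) {lam : ℝ} (hl : lam ∈ Set.Ioo (f 0) (f θ₀)) (θ : ℝ) :
    0 < cof N c θ₁ θ₂ lam θ ∧
      (cof N c θ₁ θ₂ lam θ : ℂ) = trigSum N (cofC N c lam (θ₁ lam) (θ₂ lam)) θ := by
  obtain ⟨τ, hτ, he⟩ := (trigSum_periodic N (cofC N c lam (θ₁ lam) (θ₂ lam))).exists_mem_Ico₀
    Real.two_pi_pos θ
  obtain ⟨r, hr, hr'⟩ := h.cof_pos_of_mem hl hτ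
  unfold cof
  rw [he, hr']
  simpa using hr

lemma continuous_cof (lam : ℝ) : Continuous (cof N c θ₁ θ₂ lam) := by
  unfold cof; fun_prop

/-- The cofactor is bounded away from zero at each level. -/
lemma exists_cof_lower (h : Unimodal f N c θ₀ θ₁ θ₂) {lam : ℝ}
    (hl : lam ∈ Set.Ioo (f 0) (f θ₀)) : ∃ μ > 0, ∀ θ, μ ≤ cof N c θ₁ θ₂ lam θ := by
  obtain ⟨τ, -, hτ⟩ := isCompact_Icc.exists_isMinOn
    (Set.nonempty_Icc.2 Real.two_pi_pos.le) (continuous_cof (N := N) (c := c) (θ₁ := θ₁)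
      (θ₂ := θ₂) lam).continuousOn
  refine ⟨_, (h.cof_spec hl τ).1, fun θ => ?_⟩
  obtain ⟨σ, hσ, he⟩ := (trigSum_periodic N (cofC N c lam (θ₁ lam) (θ₂ lam))).exists_mem_Ico₀
    Real.two_pi_pos θ
  have := hτ (Set.Ico_subset_Icc_self hσ)
  unfold cof at this ⊢
  rw [he]; exact this

lemma contDiffAt_cofC (h : Unimodal f N c θ₀ θ₁ θ₂) {lam : ℝ} (hl : lam ∈ Set.Ioo (f 0) (f θ₀))
    (l : ℤ) : ContDiffAt ℝ 1 (fun lam => cofC N c lam (θ₁ lam) (θ₂ lam) l) lam := by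
  have d1 : ContDiffAt ℝ 1 (fun x => (θ₁ x : ℂ)) lam :=
    Complex.ofRealCLM.contDiff.contDiffAt.comp lam (h.contDiffAt₁ hl)
  have d2 : ContDiffAt ℝ 1 (fun x => (θ₂ x : ℂ)) lam :=
    Complex.ofRealCLM.contDiff.contDiffAt.comp lam (h.contDiffAt₂ hl)
  have d3 : ContDiffAt ℝ 1 (fun x : ℝ => (x : ℂ)) lam := Complex.ofRealCLM.contDiff.contDiffAt
  have e1 : ContDiffAt ℝ 1 (fun x => Complex.exp (Complex.I * θ₁ x)) lam :=
    (contDiffAt_const.mul d1).cexp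
  have e2 : ContDiffAt ℝ 1 (fun x => Complex.exp (Complex.I * θ₂ x)) lam :=
    (contDiffAt_const.mul d2).cexp
  unfold cofC
  refine ContDiffAt.mul ?_ ?_
  · push_cast
    exact (contDiffAt_const.mul ((d1.add d2).div_const 2)).cexp
  split_ifs
  · simp only [quotPoly, Polynomial.finsetSum_coeff, Polynomial.coeff_C_mul, Polynomial.coeff_X_pow]
    refine ContDiffAt.sum fun l' _ => ContDiffAt.mul ?_ ?_
    · unfold symC
      refine contDiffAt_const.sub ?_
      split_ifs
      · exact d3
      · exact contDiffAt_const
    · exact ContDiffAt.sum fun i _ => (e1.pow _).mul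
        (ContDiffAt.sum fun k _ => (e2.pow _).mul contDiffAt_const)
  · exact contDiffAt_const

end Unimodal

/-! ### Eigenvectors of the Toeplitz matrix as null vectors -/

/-- The polynomial with coefficient vector `v`. -/
noncomputable def vecPoly {n : ℕ} (v : Fin n → ℂ) : Polynomial ℂ :=
  ∑ k : Fin n, Polynomial.monomial (k : ℕ) (v k)

lemma vecPoly_degree {n : ℕ} (v : Fin n → ℂ) : (vecPoly v).degree < n := by
  rw [← Polynomial.mem_degreeLT]
  refine Submodule.sum_mem _ fun k _ => ?_
  rw [Polynomial.mem_degreeLT]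
  refine (Polynomial.degree_monomial_le _ _).trans_lt ?_
  exact_mod_cast k.2

lemma vecPoly_coeff {n : ℕ} (v : Fin n → ℂ) (k : Fin n) : (vecPoly v).coeff k = v k := by
  simp [vecPoly, Polynomial.finsetSum_coeff, Polynomial.coeff_monomial, Fin.val_inj]

lemma vecPoly_coeff_self {n : ℕ} {V : Polynomial ℂ} (hV : V.degree < n) :
    vecPoly (fun k : Fin n => V.coeff k) = V := by
  ext j
  by_cases hj : j < n
  · exact vecPoly_coeff _ ⟨j, hj⟩
  · rw [(Polynomial.degree_lt_iff_coeff_zero _ _).1 hV j (not_lt.1 hj),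
      (Polynomial.degree_lt_iff_coeff_zero _ _).1 (vecPoly_degree _) j (not_lt.1 hj)]

lemma vecPoly_smul_add {n : ℕ} (s s' : ℂ) (v v' : Fin n → ℂ) :
    vecPoly (s • v + s' • v') = s • vecPoly v + s' • vecPoly v' := by
  simp [vecPoly, Finset.smul_sum, Finset.sum_add_distrib, Polynomial.smul_monomial]

lemma vecPoly_eq_zero {n : ℕ} {v : Fin n → ℂ} : vecPoly v = 0 ↔ v = 0 := by
  constructor
  · intro h; funext k; rw [← vecPoly_coeff v k, h]; simp
  · rintro rfl; simp [vecPoly]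

lemma toeplitz_mulVec {g : ℝ → ℂ} (hg : Continuous g) {n : ℕ} (v : Fin n → ℂ) (j : Fin n) :
    (toeplitzMatrix g n).mulVec v j = fourierCoeff' (fun θ => g θ * evC (vecPoly v) θ) (j : ℕ) := by
  have : (fun θ : ℝ => Complex.exp (-Complex.I * ((j : ℕ) : ℤ) * θ) *
      (g θ * evC (vecPoly v) θ)) = fun θ : ℝ => ∑ k : Fin n,
        v k * (Complex.exp (-Complex.I * (((j : ℕ) : ℤ) - ((k : ℕ) : ℤ) : ℤ) * θ) * g θ) := by
    funext θ
    rw [vecPoly, evC, Polynomial.eval_finsetSum, Finset.mul_sum, Finset.mul_sum]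
    refine Finset.sum_congr rfl fun k _ => ?_
    rw [Polynomial.eval_monomial, ← Complex.exp_nat_mul]
    have e : Complex.exp (-Complex.I * (((j : ℕ) : ℤ) - ((k : ℕ) : ℤ) : ℤ) * θ) =
        Complex.exp (-Complex.I * ((j : ℕ) : ℤ) * θ) * Complex.exp (((k : ℕ) : ℂ) *
          (Complex.I * θ)) := by
      rw [← Complex.exp_add]; congr 1; push_cast; ring
    rw [e]; ring
  rw [fourierCoeff'_eq, this, circMean_sum _ (fun k _ => by fun_prop)]
  simp only [circMean_const_mul, ← fourierCoeff'_eq]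
  rw [Matrix.mulVec, dotProduct]
  refine Finset.sum_congr rfl fun k _ => ?_
  rw [toeplitzMatrix, Matrix.of_apply, mul_comm]

namespace Unimodal

variable {f : ℝ → ℝ} {N : ℕ} {c : ℤ → ℂ} {θ₀ : ℝ} {θ₁ θ₂ : ℝ → ℝ}

lemma mulVec_iff (h : Unimodal f N c θ₀ θ₁ θ₂) {lam : ℝ} (hl : lam ∈ Set.Ioo (f 0) (f θ₀))
    {n : ℕ} (v : Fin n → ℂ) :
    (toeplitzMatrix (fun θ => (f θ : ℂ)) n).mulVec v = (lam : ℂ) • v ↔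
      InKer (cof N c θ₁ θ₂ lam) (θ₁ lam) (θ₂ lam) n (vecPoly v) := by
  have hfc := h.continuous
  have key : ∀ j : Fin n, Complex.exp (Complex.I * (((θ₁ lam + θ₂ lam) / 2 : ℝ) : ℂ)) *
      ((toeplitzMatrix (fun θ => (f θ : ℂ)) n).mulVec v j - lam * v j) =
      fourierCoeff' (fun θ => (cof N c θ₁ θ₂ lam θ : ℂ) *
        evC (twoRoots (θ₁ lam) (θ₂ lam) * vecPoly v) θ) (((j : ℕ) + 1 : ℕ) : ℤ) := by
    intro j
    have e := fourierCoeff'_sub_eq (h.exp_ne hl) (h.trig₁ hl) (h.trig₂ hl) (vecPoly v) ((j : ℕ) : ℤ)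
    have e2 : (fun θ => (cof N c θ₁ θ₂ lam θ : ℂ) *
        evC (twoRoots (θ₁ lam) (θ₂ lam) * vecPoly v) θ) = fun θ =>
        trigSum N (cofC N c lam (θ₁ lam) (θ₂ lam)) θ *
          evC (twoRoots (θ₁ lam) (θ₂ lam) * vecPoly v) θ := by
      funext θ; rw [(h.cof_spec hl θ).2]
    rw [e2, Nat.cast_add, Nat.cast_one, ← e]
    congr 1
    rw [toeplitz_mulVec (by fun_prop), ← vecPoly_coeff v j,
      ← fourierCoeff'_evC (vecPoly_degree v) j.2, fourierCoeff'_eq, fourierCoeff'_eq,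
      fourierCoeff'_eq, ← circMean_const_mul, sub_eq_iff_eq_add,
      ← circMean_add (by fun_prop) (by fun_prop)]
    congr 1; funext θ
    rw [← h.trig]
    ring
  constructor
  · intro hv
    refine ⟨vecPoly_degree v, fun j hj => ?_⟩
    rw [← key ⟨j, hj⟩, hv]; simp
  · rintro ⟨-, hv⟩
    funext j
    have := key j
    rw [hv j j.2] at this
    have := (mul_eq_zero.1 this).resolve_left (Complex.exp_ne_zero _)
    rw [sub_eq_zero.1 this]; simp

lemma eigen_iff (h : Unimodal f N c θ₀ θ₁ θ₂) {lam : ℝ} (hl : lam ∈ Set.Ioo (f 0) (f θ₀))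
    {n : ℕ} :
    (∃ v : Fin n → ℂ, v ≠ 0 ∧ (toeplitzMatrix (fun θ => (f θ : ℂ)) n).mulVec v = (lam : ℂ) • v) ↔
      ∃ V, V ≠ 0 ∧ InKer (cof N c θ₁ θ₂ lam) (θ₁ lam) (θ₂ lam) n V := by
  constructor
  · rintro ⟨v, hv, e⟩
    exact ⟨vecPoly v, vecPoly_eq_zero.not.2 hv, (h.mulVec_iff hl v).1 e⟩
  · rintro ⟨V, hV, e⟩
    have e' := vecPoly_coeff_self e.1
    refine ⟨fun k => V.coeff k, ?_, ?_⟩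
    · rw [← e'] at hV; exact vecPoly_eq_zero.not.1 hV
    · rw [h.mulVec_iff hl, e']; exact e

/-! ### Uniform estimates near a level -/

lemma exists_lipschitz {E : Type*} [NormedAddCommGroup E] [NormedSpace ℝ E] {g : ℝ → E} {l₀ : ℝ}
    (hg : ContDiffAt ℝ 1 g l₀) : ∃ K : ℝ, 0 ≤ K ∧ ∃ ε > 0, ∀ x ∈ Metric.ball l₀ ε,
      ∀ y ∈ Metric.ball l₀ ε, ‖g x - g y‖ ≤ K * |x - y| := by
  obtain ⟨K, t, ht, hK⟩ := hg.exists_lipschitzOnWith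
  obtain ⟨ε, hε, hsub⟩ := Metric.mem_nhds_iff.1 ht
  refine ⟨K, K.2, ε, hε, fun x hx y hy => ?_⟩
  have := hK.dist_le_mul x (hsub hx) y (hsub hy)
  rwa [dist_eq_norm, Real.dist_eq] at this

/-- Near each level the cofactors satisfy uniform bounds, their coefficients are uniformly
Lipschitz, and one exponential weight `ρ` serves all of them. -/
lemma exists_uniform (h : Unimodal f N c θ₀ θ₁ θ₂) {l₀ : ℝ} (hl₀ : l₀ ∈ Set.Ioo (f 0) (f θ₀)) :
    ∃ ε > 0, ∃ μ > 0, ∃ ρ > (1 : ℝ), ∃ M > 0, ∃ s ≥ 0, ∃ A ≥ 0,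
      (∀ x ∈ Metric.ball l₀ ε, x ∈ Set.Ioo (f 0) (f θ₀) ∧
        (∀ θ, μ ≤ cof N c θ₁ θ₂ x θ) ∧ (∀ θ, cof N c θ₁ θ₂ x θ ≤ M) ∧
        ∑ l ∈ Finset.Icc (-(N : ℤ)) (N : ℤ), ‖(ρ : ℂ) ^ l * cofC N c x (θ₁ x) (θ₂ x) l -
          cofC N c x (θ₁ x) (θ₂ x) l‖ ≤ μ / 2) ∧
      ∀ x ∈ Metric.ball l₀ ε, ∀ y ∈ Metric.ball l₀ ε,
        ∑ l ∈ Finset.Icc (-(N : ℤ)) (N : ℤ), ‖(ρ : ℂ) ^ l * (cofC N c x (θ₁ x) (θ₂ x) l -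
          cofC N c y (θ₁ y) (θ₂ y) l)‖ ≤ s * |x - y| ∧
        |θ₁ x - θ₁ y| ≤ A * |x - y| ∧ |θ₂ x - θ₂ y| ≤ A * |x - y| := by
  set β : ℝ → ℤ → ℂ := fun x => cofC N c x (θ₁ x) (θ₂ x) with hβ
  have hβc : ∀ l, ContinuousAt (fun x => β x l) l₀ := fun l => (h.contDiffAt_cofC hl₀ l).continuousAt
  obtain ⟨μ', hμ', hμ'l⟩ := h.exists_cof_lower hl₀
  set μ := μ' / 2 with hμ
  have hμ0 : 0 < μ := half_pos hμ'
  -- the weight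
  obtain ⟨ρ, hρ1, hρ2⟩ : ∃ ρ : ℝ, 1 < ρ ∧
      ∑ l ∈ Finset.Icc (-(N : ℤ)) (N : ℤ), ‖(ρ : ℂ) ^ l * β l₀ l - β l₀ l‖ < μ / 2 := by
    have hc : ContinuousAt (fun ρ : ℝ => ∑ l ∈ Finset.Icc (-(N : ℤ)) (N : ℤ),
        ‖(ρ : ℂ) ^ l * β l₀ l - β l₀ l‖) 1 := by
      refine tendsto_finsetSum _ fun l _ => ?_
      have : ContinuousAt (fun ρ : ℝ => (ρ : ℂ) ^ l) 1 :=
        Complex.continuous_ofReal.continuousAt.zpow₀ l (Or.inl (by simp))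
      exact ((this.mul continuousAt_const).sub continuousAt_const).norm
    have h0 := hc.eventually_lt_const (u := μ / 2) (by simpa using hμ0)
    obtain ⟨ε, hε, hs⟩ := Metric.eventually_nhds_iff.1 h0
    refine ⟨1 + ε / 2, by linarith, hs ?_⟩
    rw [Real.dist_eq, add_sub_cancel_left, abs_of_pos (by linarith)]; linarith
  have ev1 : ∀ᶠ x in 𝓝 l₀, ∑ l ∈ Finset.Icc (-(N : ℤ)) (N : ℤ),
      ‖(ρ : ℂ) ^ l * β x l - β x l‖ < μ / 2 := by
    have hc : ContinuousAt (fun x => ∑ l ∈ Finset.Icc (-(N : ℤ)) (N : ℤ),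
        ‖(ρ : ℂ) ^ l * β x l - β x l‖) l₀ :=
      tendsto_finsetSum _ fun l _ => ((continuousAt_const.mul (hβc l)).sub (hβc l)).norm
    exact hc.eventually_lt_const hρ2
  have ev2 : ∀ᶠ x in 𝓝 l₀, ∑ l ∈ Finset.Icc (-(N : ℤ)) (N : ℤ), ‖β x l - β l₀ l‖ < μ := by
    have hc : ContinuousAt (fun x => ∑ l ∈ Finset.Icc (-(N : ℤ)) (N : ℤ),
        ‖β x l - β l₀ l‖) l₀ :=
      tendsto_finsetSum _ fun l _ => ((hβc l).sub continuousAt_const).norm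
    exact hc.eventually_lt_const (by simpa using hμ0)
  set M := (∑ l ∈ Finset.Icc (-(N : ℤ)) (N : ℤ), ‖β l₀ l‖) + 1 with hM
  have hM0 : 0 < M := by positivity
  have ev3 : ∀ᶠ x in 𝓝 l₀, ∑ l ∈ Finset.Icc (-(N : ℤ)) (N : ℤ), ‖β x l‖ < M := by
    have hc : ContinuousAt (fun x => ∑ l ∈ Finset.Icc (-(N : ℤ)) (N : ℤ), ‖β x l‖) l₀ :=
      tendsto_finsetSum _ fun l _ => (hβc l).norm
    exact hc.eventually_lt_const (by rw [hM]; linarith)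
  obtain ⟨K, hK0, ε₂, hε₂, hK⟩ := exists_lipschitz
    (g := fun x (l : Finset.Icc (-(N : ℤ)) (N : ℤ)) => (ρ : ℂ) ^ (l : ℤ) * β x l) (l₀ := l₀)
    (contDiffAt_pi.2 fun l => contDiffAt_const.mul (h.contDiffAt_cofC hl₀ l))
  obtain ⟨A₁, hA₁, ε₃, hε₃, hL₁⟩ := exists_lipschitz (h.contDiffAt₁ hl₀)
  obtain ⟨A₂, hA₂, ε₄, hε₄, hL₂⟩ := exists_lipschitz (h.contDiffAt₂ hl₀)
  obtain ⟨ε₁, hε₁, hev⟩ := Metric.eventually_nhds_iff_ball.1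
    (ev1.and (ev2.and (ev3.and (isOpen_Ioo.mem_nhds hl₀))))
  refine ⟨min (min ε₁ ε₂) (min ε₃ ε₄), lt_min (lt_min hε₁ hε₂) (lt_min hε₃ hε₄), μ, hμ0, ρ, hρ1, M,
    hM0, (Finset.Icc (-(N : ℤ)) (N : ℤ)).card * K, by positivity, max A₁ A₂,
    le_max_of_le_left hA₁, fun x hx => ?_, fun x hx y hy => ?_⟩
  · obtain ⟨a1, a2, a3, a4⟩ := hev x (Metric.ball_subset_ball
      ((min_le_left _ _).trans (min_le_left _ _)) hx)
    refine ⟨a4, fun θ => ?_, fun θ => ?_, a1.le⟩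
    · have e := norm_trigSum_le N (fun l => β x l - β l₀ l) θ
      rw [← trigSum_sub, ← (h.cof_spec a4 θ).2, ← (h.cof_spec hl₀ θ).2, ← Complex.ofReal_sub,
        Complex.norm_real, Real.norm_eq_abs] at e
      have := (abs_le.1 (e.trans a2.le)).1
      have := hμ'l θ
      linarith
    · have e := norm_trigSum_le N (β x) θ
      rw [← (h.cof_spec a4 θ).2, Complex.norm_real, Real.norm_eq_abs] at e
      exact (le_abs_self _).trans (e.trans a3.le)
  · have s2 := Metric.ball_subset_ball (x := l₀)
      ((min_le_left (min ε₁ ε₂) (min ε₃ ε₄)).trans (min_le_right _ _))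
    have s3 := Metric.ball_subset_ball (x := l₀)
      ((min_le_right (min ε₁ ε₂) (min ε₃ ε₄)).trans (min_le_left _ _))
    have s4 := Metric.ball_subset_ball (x := l₀)
      ((min_le_right (min ε₁ ε₂) (min ε₃ ε₄)).trans (min_le_right _ _))
    refine ⟨?_, ?_, ?_⟩
    · have e := hK x (s2 hx) y (s2 hy)
      have e2 : ∀ l ∈ Finset.Icc (-(N : ℤ)) (N : ℤ),
          ‖(ρ : ℂ) ^ l * (β x l - β y l)‖ ≤ K * |x - y| := by
        intro l hl
        refine le_trans ?_ e
        have := norm_le_pi_norm ((fun (l : Finset.Icc (-(N : ℤ)) (N : ℤ)) =>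
          (ρ : ℂ) ^ (l : ℤ) * β x l) -
          fun l : Finset.Icc (-(N : ℤ)) (N : ℤ) => (ρ : ℂ) ^ (l : ℤ) * β y l) ⟨l, hl⟩
        rwa [Pi.sub_apply, ← mul_sub] at this
      calc _ ≤ ∑ _l ∈ Finset.Icc (-(N : ℤ)) (N : ℤ), K * |x - y| := Finset.sum_le_sum e2
        _ = _ := by rw [Finset.sum_const, nsmul_eq_mul, mul_assoc]
    · refine (hL₁ x (s3 hx) y (s3 hy)).trans ?_
      gcongr; exact le_max_left _ _
    · refine (hL₂ x (s4 hx) y (s4 hy)).trans ?_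
      gcongr; exact le_max_right _ _

end Unimodal

/-! ### The quantization condition -/

lemma norm_log_sub_log_le {z w : ℂ} (hz : z ∈ Metric.closedBall (1 : ℂ) (1 / 2))
    (hw : w ∈ Metric.closedBall (1 : ℂ) (1 / 2)) :
    ‖Complex.log z - Complex.log w‖ ≤ 2 * ‖z - w‖ := by
  have hn : ∀ u ∈ Metric.closedBall (1 : ℂ) (1 / 2), 1 / 2 ≤ ‖u‖ ∧ u ∈ Complex.slitPlane := by
    intro u hu
    rw [mem_closedBall_iff_norm] at hu
    constructor
    · have := norm_sub_norm_le (1 : ℂ) (1 - u)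
      rw [norm_sub_rev 1 u, sub_sub_cancel, norm_one] at this
      linarith
    · left
      have := (abs_le.1 ((Complex.abs_re_le_norm (u - 1)).trans hu)).1
      rw [Complex.sub_re, Complex.one_re] at this
      linarith
  refine (convex_closedBall (1 : ℂ) (1 / 2)).norm_image_sub_le_of_norm_hasDerivWithin_le
    (f := Complex.log) (f' := fun u => u⁻¹)
    (fun u hu => (Complex.hasDerivAt_log (hn u hu).2).hasDerivWithinAt) (fun u hu => ?_) hw hz
  rw [norm_inv]
  have := (hn u hu).1
  rw [inv_le_comm₀ (by linarith) (by norm_num)]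
  linarith

namespace Unimodal

variable {f : ℝ → ℝ} {N : ℕ} {c : ℤ → ℂ} {θ₀ : ℝ} {θ₁ θ₂ : ℝ → ℝ}

/-- Near each level, the eigenvalue equation of all the matrices `T_n(f)` takes the form
`t₂ ^ (n + 1) * conj R = t₁ ^ (n + 1) * R` with `R` Lipschitz and bounded away from zero uniformly
in `n`. -/
lemma exists_R (h : Unimodal f N c θ₀ θ₁ θ₂) {l₀ : ℝ} (hl₀ : l₀ ∈ Set.Ioo (f 0) (f θ₀)) :
    ∃ ε > 0, ∃ κ > 0, ∃ Λ ≥ 0, Metric.ball l₀ ε ⊆ Set.Ioo (f 0) (f θ₀) ∧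
      ∀ n : ℕ, ∃ R : ℝ → ℂ,
        (∀ x ∈ Metric.ball l₀ ε, κ ≤ ‖R x‖) ∧
        (∀ x ∈ Metric.ball l₀ ε, ∀ y ∈ Metric.ball l₀ ε, ‖R x - R y‖ ≤ Λ * |x - y|) ∧
        ∀ x ∈ Metric.ball l₀ ε,
          ((∃ v : Fin n → ℂ, v ≠ 0 ∧
            (toeplitzMatrix (fun θ => (f θ : ℂ)) n).mulVec v = (x : ℂ) • v) ↔
            Complex.exp (Complex.I * (θ₂ x)) ^ (n + 1) * (starRingEnd ℂ) (R x) =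
              Complex.exp (Complex.I * (θ₁ x)) ^ (n + 1) * R x) ∧
          ∀ v v' : Fin n → ℂ,
            (toeplitzMatrix (fun θ => (f θ : ℂ)) n).mulVec v = (x : ℂ) • v →
            (toeplitzMatrix (fun θ => (f θ : ℂ)) n).mulVec v' = (x : ℂ) • v' →
            ∃ s s' : ℂ, (s ≠ 0 ∨ s' ≠ 0) ∧ s • v + s' • v' = 0 := by
  obtain ⟨ε, hε, μ, hμ, ρ, hρ, M, hM, s, hs, A, hA, H1, H2⟩ := h.exists_uniform hl₀
  have hρ0 : 0 < ρ := one_pos.trans hρ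
  set r := ρ⁻¹ with hr
  have hr0 : 0 ≤ r := by positivity
  have hr1 : r < 1 := inv_lt_one_of_one_lt₀ hρ
  set G := ∑' j : ℕ, r ^ j with hG
  have hG0 : 0 ≤ G := tsum_nonneg fun j => by positivity
  set B := 2 / μ with hB
  have hB0 : 0 < B := by positivity
  set S := B * ∑' j : ℕ, (j : ℝ) * r ^ j with hS
  have hS0 : 0 ≤ S := mul_nonneg hB0.le (tsum_nonneg fun j => by positivity)
  set D := 2 * s * B / μ * G with hD
  have hD0 : 0 ≤ D := by positivity
  set κ := 1 / (2 * (M ^ 2 * S + M)) with hκ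
  have hκ0 : 0 < κ := by positivity
  refine ⟨ε, hε, κ * κ, by positivity, (D + S * A) * (B * G) + (B * G) * (D + S * A), by positivity,
    fun x hx => (H1 x hx).1, fun n => ?_⟩
  have hex : ∀ x, ∃ Y : Polynomial ℂ, x ∈ Metric.ball l₀ ε →
      IsFirstCol (fun θ => (cof N c θ₁ θ₂ x θ : ℂ)) (n + 2) Y := by
    intro x
    by_cases hx : x ∈ Metric.ball l₀ ε
    · obtain ⟨Y, hY⟩ := exists_isFirstCol (continuous_cof (N := N) (c := c) (θ₁ := θ₁)
        (θ₂ := θ₂) x) hμ (H1 x hx).2.1 (n + 2)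
      exact ⟨Y, fun _ => hY⟩
    · exact ⟨0, fun h => absurd h hx⟩
  choose Y hY using hex
  have hcof : ∀ x ∈ Metric.ball l₀ ε, ∀ θ, (cof N c θ₁ θ₂ x θ : ℂ) =
      trigSum N (cofC N c x (θ₁ x) (θ₂ x)) θ := fun x hx θ => (h.cof_spec (H1 x hx).1 θ).2
  have hY' : ∀ x ∈ Metric.ball l₀ ε,
      IsFirstCol (trigSum N (cofC N c x (θ₁ x) (θ₂ x))) (n + 2) (Y x) := by
    intro x hx
    have := hY x hx
    rwa [show (fun θ => (cof N c θ₁ θ₂ x θ : ℂ)) = trigSum N (cofC N c x (θ₁ x) (θ₂ x)) from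
      funext (hcof x hx)] at this
  have hw : ∀ x ∈ Metric.ball l₀ ε,
      ∑ j ∈ Finset.range (n + 2), ‖(weighted ρ (Y x)).coeff j‖ ^ 2 ≤ B ^ 2 := fun x hx =>
    (hY' x hx).sum_weighted_le (hcof x hx) hμ (H1 x hx).2.1 hρ0 (H1 x hx).2.2.2 (by omega)
  have hgeo : ∀ x ∈ Metric.ball l₀ ε, ∀ j, ‖(Y x).coeff j‖ ≤ B * r ^ j := fun x hx =>
    norm_coeff_le_geometric (hY x hx).1 hρ0 hB0.le (hw x hx)
  have hup : ∀ x ∈ Metric.ball l₀ ε, ∀ θ, ‖evC (Y x) θ‖ ≤ B * G := fun x hx θ =>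
    norm_evC_le (hY x hx).1 hr0 hr1 hB0.le (hgeo x hx) θ
  have hsum : ∀ x ∈ Metric.ball l₀ ε,
      ∑ j ∈ Finset.range (n + 2), (j : ℝ) * ‖(Y x).coeff j‖ ≤ S := fun x hx =>
    sum_mul_norm_coeff_le hr0 hr1 hB0.le (hgeo x hx) _
  have hlow : ∀ x ∈ Metric.ball l₀ ε, ∀ θ, κ ≤ ‖evC (Y x) θ‖ := by
    intro x hx θ
    have := (hY x hx).lower_bound (continuous_cof x) (fun θ => hμ.le.trans ((H1 x hx).2.1 θ)) hM
      (H1 x hx).2.2.1 (by omega) (hsum x hx) θ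
    rw [hκ, div_le_iff₀ (by positivity)]
    linarith
  have hdiff : ∀ x ∈ Metric.ball l₀ ε, ∀ y ∈ Metric.ball l₀ ε, ∀ θ,
      ‖evC (Y x) θ - evC (Y y) θ‖ ≤ D * |x - y| := by
    intro x hx y hy θ
    have e1 := (hY' x hx).sum_weighted_sub_le (hcof x hx) hμ (H1 x hx).2.1 hρ0 (H1 x hx).2.2.2
      (hY' y hy) (hw y hy) (H2 x hx y hy).1
    have hd : (Y x - Y y).degree < ((n + 2 : ℕ) : WithBot ℕ) :=
      (Polynomial.degree_sub_le _ _).trans_lt (max_lt (hY x hx).1 (hY y hy).1)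
    have hb0 : 0 ≤ 2 * (s * |x - y|) * B / μ := by positivity
    have e2 := norm_evC_le hd hr0 hr1 hb0 (norm_coeff_le_geometric hd hρ0 hb0 e1) θ
    have e3 : evC (Y x - Y y) θ = evC (Y x) θ - evC (Y y) θ := by simp [evC]
    rw [e3] at e2
    refine e2.trans (le_of_eq ?_)
    rw [hD]; ring
  have hmove : ∀ x ∈ Metric.ball l₀ ε, ∀ y ∈ Metric.ball l₀ ε, ∀ θ τ, |θ - τ| ≤ A * |x - y| →
      ‖evC (Y x) θ - evC (Y y) τ‖ ≤ (D + S * A) * |x - y| := by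
    intro x hx y hy θ τ hθ
    have e1 := hdiff x hx y hy θ
    have e2 := norm_evC_sub_le (hY y hy).1 θ τ
    have e3 : (∑ j ∈ Finset.range (n + 2), (j : ℝ) * ‖(Y y).coeff j‖) * |θ - τ| ≤
        S * (A * |x - y|) := mul_le_mul (hsum y hy) hθ (abs_nonneg _) hS0
    calc _ = ‖(evC (Y x) θ - evC (Y y) θ) + (evC (Y y) θ - evC (Y y) τ)‖ := by
          congr 1; ring
      _ ≤ _ := norm_add_le _ _
      _ ≤ D * |x - y| + S * (A * |x - y|) := by linarith
      _ = _ := by ring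
  refine ⟨fun x => evC (Y x) (θ₂ x) * (starRingEnd ℂ) (evC (Y x) (θ₁ x)), fun x hx => ?_,
    fun x hx y hy => ?_, fun x hx => ⟨?_, ?_⟩⟩
  · rw [norm_mul, RCLike.norm_conj]
    exact mul_le_mul (hlow x hx _) (hlow x hx _) hκ0.le (norm_nonneg _)
  · have m1 := hmove x hx y hy _ _ (H2 x hx y hy).2.1
    have m2 := hmove x hx y hy _ _ (H2 x hx y hy).2.2
    have e : evC (Y x) (θ₂ x) * (starRingEnd ℂ) (evC (Y x) (θ₁ x)) -
        evC (Y y) (θ₂ y) * (starRingEnd ℂ) (evC (Y y) (θ₁ y)) =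
        (evC (Y x) (θ₂ x) - evC (Y y) (θ₂ y)) * (starRingEnd ℂ) (evC (Y x) (θ₁ x)) +
        evC (Y y) (θ₂ y) * (starRingEnd ℂ) (evC (Y x) (θ₁ x) - evC (Y y) (θ₁ y)) := by
      rw [map_sub]; ring
    rw [e]
    refine (norm_add_le _ _).trans ?_
    rw [norm_mul, norm_mul, RCLike.norm_conj, RCLike.norm_conj, add_mul]
    refine add_le_add ?_ ?_
    · calc _ ≤ ((D + S * A) * |x - y|) * (B * G) :=
            mul_le_mul m2 (hup x hx _) (norm_nonneg _) (by positivity)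
        _ = _ := by ring
    · calc _ ≤ (B * G) * ((D + S * A) * |x - y|) :=
            mul_le_mul (hup y hy _) m1 (norm_nonneg _) (by positivity)
        _ = _ := by ring
  · rw [h.eigen_iff (H1 x hx).1]
    have hne : evC (Y x) (θ₁ x) ≠ 0 := norm_pos_iff.1 (hκ0.trans_le (hlow x hx _))
    exact exists_inKer_iff (continuous_cof x) hμ (H1 x hx).2.1 (h.exp_ne (H1 x hx).1) (hY x hx) hne
  · intro v v' hv hv'
    have hne : evC (Y x) (θ₁ x) ≠ 0 := norm_pos_iff.1 (hκ0.trans_le (hlow x hx _))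
    obtain ⟨s, s', h0, h1⟩ := InKer.dependent (continuous_cof x) hμ (H1 x hx).2.1 (hY x hx) hne
      ((h.mulVec_iff (H1 x hx).1 v).1 hv) ((h.mulVec_iff (H1 x hx).1 v').1 hv')
    rw [← vecPoly_smul_add, vecPoly_eq_zero] at h1
    exact ⟨s, s', h0, h1⟩

/-- Taking arguments in the eigenvalue equation, with `ω` an argument of `R`. -/
lemma unimodular_iff (θ₁ θ₂ ω r : ℝ) (hr : 0 < r) (n : ℕ) {R : ℂ}
    (hR : R = r * Complex.exp (Complex.I * ω)) :
    Complex.exp (Complex.I * θ₂) ^ (n + 1) * (starRingEnd ℂ) R =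
      Complex.exp (Complex.I * θ₁) ^ (n + 1) * R ↔
    ∃ j : ℤ, ((n : ℝ) + 1) * ((θ₁ - θ₂) / 2 + Real.pi) + ω = Real.pi * j := by
  have hr' : (r : ℂ) ≠ 0 := by exact_mod_cast hr.ne'
  have hpi : (Real.pi : ℂ) ≠ 0 := by exact_mod_cast Real.pi_ne_zero
  have e1 : Complex.exp (Complex.I * θ₂) ^ (n + 1) * (starRingEnd ℂ) R =
      r * Complex.exp (((n : ℂ) + 1) * (Complex.I * θ₂) - Complex.I * ω) := by
    rw [hR, map_mul, Complex.conj_ofReal, ← Complex.exp_conj, ← Complex.exp_nat_mul, mul_left_comm,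
      ← Complex.exp_add]
    congr 2
    simp only [map_mul, Complex.conj_I, Complex.conj_ofReal]
    push_cast; ring
  have e2 : Complex.exp (Complex.I * θ₁) ^ (n + 1) * R =
      r * Complex.exp (((n : ℂ) + 1) * (Complex.I * θ₁) + Complex.I * ω) := by
    rw [hR, ← Complex.exp_nat_mul, mul_left_comm, ← Complex.exp_add]
    congr 2
    push_cast; ring
  rw [e1, e2, mul_right_inj' hr', eq_comm, Complex.exp_eq_exp_iff_exists_int]
  constructor
  · rintro ⟨j, hj⟩
    refine ⟨j + (n + 1), ?_⟩
    have h1 : Complex.I * (((((n : ℝ) + 1) * ((θ₁ - θ₂) / 2 + Real.pi) + ω -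
        Real.pi * ((j + (n + 1) : ℤ) : ℝ) : ℝ)) : ℂ) = 0 := by
      push_cast; linear_combination hj / 2
    have h2 := (mul_eq_zero.1 h1).resolve_left Complex.I_ne_zero
    exact sub_eq_zero.1 (by exact_mod_cast h2)
  · rintro ⟨j, hj⟩
    refine ⟨j - (n + 1), ?_⟩
    have h1 := congrArg (fun x : ℝ => (x : ℂ)) hj
    push_cast at h1 ⊢
    linear_combination 2 * Complex.I * h1

/-- Near each level, the eigenvalues of `T_n(f)` are simple and are the solutions of
`(n + 1) ψ + ω ∈ π ℤ`, where `ω = ω_n` is Lipschitz uniformly in `n`. -/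
lemma local_quantization (h : Unimodal f N c θ₀ θ₁ θ₂) {l₀ : ℝ}
    (hl₀ : l₀ ∈ Set.Ioo (f 0) (f θ₀)) :
    ∃ ε > 0, ∃ C ≥ 0, Metric.ball l₀ ε ⊆ Set.Ioo (f 0) (f θ₀) ∧
      ∀ n : ℕ, ∃ ω : ℝ → ℝ,
        (∀ x ∈ Metric.ball l₀ ε, ∀ y ∈ Metric.ball l₀ ε, |ω x - ω y| ≤ C * |x - y|) ∧
        ∀ x ∈ Metric.ball l₀ ε,
          ((∃ v : Fin n → ℂ, v ≠ 0 ∧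
            (toeplitzMatrix (fun θ => (f θ : ℂ)) n).mulVec v = (x : ℂ) • v) ↔
            ∃ j : ℤ, ((n : ℝ) + 1) * psiFn θ₁ θ₂ x + ω x = Real.pi * j) ∧
          ∀ v v' : Fin n → ℂ,
            (toeplitzMatrix (fun θ => (f θ : ℂ)) n).mulVec v = (x : ℂ) • v →
            (toeplitzMatrix (fun θ => (f θ : ℂ)) n).mulVec v' = (x : ℂ) • v' →
            ∃ s s' : ℂ, (s ≠ 0 ∨ s' ≠ 0) ∧ s • v + s' • v' = 0 := by
  obtain ⟨ε₀, hε₀, κ, hκ, Λ, hΛ, hsub, H⟩ := h.exists_R hl₀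
  -- on this smaller ball `R / R l₀` stays within `1 / 2` of `1`
  set ε := min ε₀ (κ / (2 * (Λ + 1))) with hε
  have hε0 : 0 < ε := lt_min hε₀ (by positivity)
  have hb : Metric.ball l₀ ε ⊆ Metric.ball l₀ ε₀ := Metric.ball_subset_ball (min_le_left _ _)
  refine ⟨ε, hε0, 2 * (Λ / κ), by positivity, hb.trans hsub, fun n => ?_⟩
  obtain ⟨R, hR1, hR2, hR3⟩ := H n
  have hc : l₀ ∈ Metric.ball l₀ ε₀ := Metric.mem_ball_self hε₀
  have hR0 : R l₀ ≠ 0 := norm_pos_iff.1 (hκ.trans_le (hR1 l₀ hc))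
  have hq : ∀ x ∈ Metric.ball l₀ ε, ∀ y ∈ Metric.ball l₀ ε,
      ‖R x / R l₀ - R y / R l₀‖ ≤ Λ / κ * |x - y| := by
    intro x hx y hy
    rw [← sub_div, norm_div, div_mul_eq_mul_div]
    exact div_le_div₀ (by positivity) (hR2 x (hb hx) y (hb hy)) hκ (hR1 l₀ hc)
  have hball : ∀ x ∈ Metric.ball l₀ ε, R x / R l₀ ∈ Metric.closedBall (1 : ℂ) (1 / 2) := by
    intro x hx
    rw [mem_closedBall_iff_norm]
    have e := hq x hx l₀ (Metric.mem_ball_self hε0)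
    rw [div_self hR0] at e
    refine e.trans ?_
    have hx' : |x - l₀| ≤ κ / (2 * (Λ + 1)) := by
      rw [Metric.mem_ball, Real.dist_eq] at hx
      exact hx.le.trans (min_le_right _ _)
    calc Λ / κ * |x - l₀| ≤ Λ / κ * (κ / (2 * (Λ + 1))) := by gcongr
      _ = (Λ / (Λ + 1)) * (1 / 2) := by field_simp
      _ ≤ 1 * (1 / 2) := by
          gcongr
          rw [div_le_one (by positivity)]; linarith
      _ = 1 / 2 := one_mul _
  refine ⟨fun x => Complex.arg (R l₀) + (Complex.log (R x / R l₀)).im, fun x hx y hy => ?_,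
    fun x hx => ⟨?_, (hR3 x (hb hx)).2⟩⟩
  · rw [add_sub_add_left_eq_sub, ← Complex.sub_im]
    refine (Complex.abs_im_le_norm _).trans
      ((norm_log_sub_log_le (hball x hx) (hball y hy)).trans ?_)
    have := hq x hx y hy
    linarith
  · rw [(hR3 x (hb hx)).1]
    have hRx : R x ≠ 0 := norm_pos_iff.1 (hκ.trans_le (hR1 x (hb hx)))
    refine unimodular_iff _ _ _ ‖R x‖ (norm_pos_iff.2 hRx) n ?_
    have e1 := Complex.norm_mul_exp_arg_mul_I (R l₀)
    have e2 := Complex.norm_mul_exp_arg_mul_I (R x / R l₀)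
    rw [← Complex.log_im] at e2
    have e3 : (‖R x / R l₀‖ : ℂ) * ‖R l₀‖ = ‖R x‖ := by
      rw [← Complex.ofReal_mul, ← norm_mul, div_mul_cancel₀ _ hR0]
    calc R x = R x / R l₀ * R l₀ := by field_simp
      _ = (‖R x / R l₀‖ * Complex.exp ((Complex.log (R x / R l₀)).im * Complex.I)) *
          (‖R l₀‖ * Complex.exp (Complex.arg (R l₀) * Complex.I)) := by rw [e1, e2]
      _ = (‖R x / R l₀‖ * ‖R l₀‖ : ℂ) * (Complex.exp (Complex.arg (R l₀) * Complex.I) *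
          Complex.exp ((Complex.log (R x / R l₀)).im * Complex.I)) := by ring
      _ = _ := by
        rw [e3, ← Complex.exp_add]; congr 2; push_cast; ring

end Unimodal

/-! ### The ordered list of eigenvalues -/

/-- Near each level of `(L, M)`, the entries of the `n`-th list `lam n 0, …, lam n (n - 1)` are
distinct and are exactly the solutions of `(n + 1) ψ + ω ∈ π ℤ`, for some function `ω = ω_n` which
is Lipschitz uniformly in `n`. -/
def LocallyQuantized (lam : ℕ → ℕ → ℝ) (ψ : ℝ → ℝ) (L M : ℝ) : Prop :=
  ∀ l₀ ∈ Set.Ioo L M, ∃ ε > 0, ∃ C ≥ 0, Metric.ball l₀ ε ⊆ Set.Ioo L M ∧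
    ∀ n : ℕ, ∃ ω : ℝ → ℝ,
      (∀ x ∈ Metric.ball l₀ ε, ∀ y ∈ Metric.ball l₀ ε, |ω x - ω y| ≤ C * |x - y|) ∧
      (∀ x ∈ Metric.ball l₀ ε,
        (∃ i < n, lam n i = x) ↔ ∃ j : ℤ, ((n : ℝ) + 1) * ψ x + ω x = Real.pi * j) ∧
      ∀ i < n, ∀ i' < n, lam n i = lam n i' → lam n i ∈ Metric.ball l₀ ε → i = i'

lemma isHermitian_exists_eigenvalues_eq {n : ℕ} {A : Matrix (Fin n) (Fin n) ℂ}
    (hA : A.IsHermitian) {x : ℝ} {v : Fin n → ℂ} (hv : v ≠ 0) (h : A.mulVec v = (x : ℂ) • v) :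
    ∃ i, hA.eigenvalues i = x := by
  have h1 : A.charpoly.eval (x : ℂ) = 0 := by
    rw [Matrix.eval_charpoly]
    refine Matrix.exists_mulVec_eq_zero_iff.1 ⟨v, hv, ?_⟩
    rw [Matrix.sub_mulVec, h]
    ext i
    simp [Matrix.scalar_apply]
  rw [hA.charpoly_eq, Polynomial.eval_prod, Finset.prod_eq_zero_iff] at h1
  obtain ⟨i, -, hi⟩ := h1
  refine ⟨i, ?_⟩
  simp only [Polynomial.eval_sub, Polynomial.eval_X, Polynomial.eval_C, sub_eq_zero] at hi
  exact Complex.ofReal_injective hi.symm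

lemma Unimodal.locallyQuantized {f : ℝ → ℝ} {N : ℕ} {c : ℤ → ℂ} {θ₀ : ℝ} {θ₁ θ₂ : ℝ → ℝ}
    (h : Unimodal f N c θ₀ θ₁ θ₂)
    (hH : ∀ n : ℕ, (toeplitzMatrix (fun θ => (f θ : ℂ)) n).IsHermitian)
    {lam : (n : ℕ) → ℕ → ℝ}
    (hperm : ∀ n : ℕ, ∃ σ : Equiv.Perm (Fin n),
      ∀ i : Fin n, lam n (i : ℕ) = (hH n).eigenvalues (σ i)) :
    LocallyQuantized lam (psiFn θ₁ θ₂) (f 0) (f θ₀) := by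
  intro l₀ hl₀
  obtain ⟨ε, hε, C, hC, hsub, H⟩ := h.local_quantization hl₀
  refine ⟨ε, hε, C, hC, hsub, fun n => ?_⟩
  obtain ⟨ω, hω, hx⟩ := H n
  obtain ⟨σ, hσ⟩ := hperm n
  have hvec : ∀ i : Fin n, (toeplitzMatrix (fun θ => (f θ : ℂ)) n).mulVec
      ((hH n).eigenvectorBasis i).ofLp =
      (((hH n).eigenvalues i : ℝ) : ℂ) • ((hH n).eigenvectorBasis i).ofLp := fun i => by
    rw [(hH n).mulVec_eigenvectorBasis i]
    ext j; simp
  refine ⟨ω, hω, fun x hxb => ?_, fun i hi i' hi' hii hib => ?_⟩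
  · rw [← (hx x hxb).1]
    constructor
    · rintro ⟨i, hi, rfl⟩
      have e := hσ ⟨i, hi⟩
      simp only at e
      refine ⟨_, ?_, by rw [e]; exact hvec (σ ⟨i, hi⟩)⟩
      have := (hH n).eigenvectorBasis.orthonormal.ne_zero (σ ⟨i, hi⟩)
      intro h0
      exact this ((WithLp.ofLp_eq_zero 2).1 h0)
    · rintro ⟨v, hv, hv'⟩
      obtain ⟨i, hi⟩ := isHermitian_exists_eigenvalues_eq (hH n) hv hv'
      refine ⟨(σ.symm i : Fin n), (σ.symm i).2, ?_⟩
      rw [hσ, Equiv.apply_symm_apply, hi]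
  · by_contra hne
    have e := hσ ⟨i, hi⟩
    have e' := hσ ⟨i', hi'⟩
    simp only at e e'
    have hne' : σ ⟨i, hi⟩ ≠ σ ⟨i', hi'⟩ := fun h => hne (by simpa using σ.injective h)
    obtain ⟨s, s', h0, h1⟩ := (hx _ hib).2 _ _ (by rw [e]; exact hvec (σ ⟨i, hi⟩))
      (by rw [hii, e']; exact hvec (σ ⟨i', hi'⟩))
    have hli : LinearIndepOn ℂ (hH n).eigenvectorBasis {σ ⟨i, hi⟩, σ ⟨i', hi'⟩} :=
      (hH n).eigenvectorBasis.orthonormal.linearIndependent.comp _ Subtype.val_injective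
    have h2 := (LinearIndepOn.pair_iff _ hne').1 hli s s' (WithLp.ofLp_injective 2 (by simpa using h1))
    exact h0.elim (fun h => h h2.1) (fun h => h h2.2)

/-! ### Counting eigenvalues -/

/-- The number of entries of the `n`-th list in `(a, b]`. -/
noncomputable def countIoc (lam : ℕ → ℕ → ℝ) (n : ℕ) (a b : ℝ) : ℕ :=
  Nat.card {i : Fin n // lam n i ∈ Set.Ioc a b}

lemma countIoc_eq_add (lam : ℕ → ℕ → ℝ) (n : ℕ) {a b c : ℝ} (hab : a ≤ b) (hbc : b ≤ c) :
    countIoc lam n a c = countIoc lam n a b + countIoc lam n b c := by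
  classical
  unfold countIoc
  rw [Nat.subtype_card (Finset.univ.filter fun i : Fin n => lam n i ∈ Set.Ioc a c) (by simp),
    Nat.subtype_card (Finset.univ.filter fun i : Fin n => lam n i ∈ Set.Ioc a b) (by simp),
    Nat.subtype_card (Finset.univ.filter fun i : Fin n => lam n i ∈ Set.Ioc b c) (by simp),
    ← Finset.card_union_of_disjoint, ← Finset.filter_or]
  · simp only [← Set.mem_union, Set.Ioc_union_Ioc_eq_Ioc hab hbc]
  · rw [Finset.disjoint_filter]
    intro i _ h1 h2
    exact absurd h2.1 (not_lt.2 h1.2)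

lemma countIoc_le_of_lt {lam : ℕ → ℕ → ℝ} {n k : ℕ} {a b : ℝ}
    (h : ∀ i < n, lam n i ∈ Set.Ioc a b → i < k) : countIoc lam n a b ≤ k := by
  have : Function.Injective
      (fun i : {i : Fin n // lam n i ∈ Set.Ioc a b} => (⟨i.1, h i.1 i.1.2 i.2⟩ : Fin k)) := by
    intro i j hij
    simp only [Fin.mk.injEq] at hij
    exact Subtype.ext (Fin.ext hij)
  simpa [countIoc] using Nat.card_le_card_of_injective _ this

lemma countIoc_le_of_ge {lam : ℕ → ℕ → ℝ} {n k : ℕ} {a b : ℝ} (hk : k ≤ n)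
    (h : ∀ i < n, lam n i ∈ Set.Ioc a b → k ≤ i) : countIoc lam n a b + k ≤ n := by
  have : Function.Injective
      (fun i : {i : Fin n // lam n i ∈ Set.Ioc a b} =>
        (⟨i.1 - k, by have := h i.1 i.1.2 i.2; have := i.1.2; omega⟩ : Fin (n - k))) := by
    intro i j hij
    have h1 := h i.1 i.1.2 i.2
    have h2 := h j.1 j.1.2 j.2
    simp only [Fin.mk.injEq] at hij
    exact Subtype.ext (Fin.ext (by omega))
  have h3 : countIoc lam n a b ≤ n - k := by
    simpa [countIoc] using Nat.card_le_card_of_injective _ this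
  omega

lemma continuousOn_of_abs_sub_le {ω : ℝ → ℝ} {s : Set ℝ} {C : ℝ}
    (h : ∀ x ∈ s, ∀ y ∈ s, |ω x - ω y| ≤ C * |x - y|) : ContinuousOn ω s := by
  have : LipschitzOnWith C.toNNReal ω s := by
    refine LipschitzOnWith.of_dist_le_mul fun x hx y hy => ?_
    rw [Real.dist_eq, Real.dist_eq]
    exact (h x hx y hy).trans
      (mul_le_mul_of_nonneg_right (Real.le_coe_toNNReal C) (abs_nonneg _))
  exact this.continuousOn

namespace LocallyQuantized

variable {lam : ℕ → ℕ → ℝ} {ψ : ℝ → ℝ} {L M : ℝ}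

/-- Each integer `j` with `H_n(a) < π j ≤ H_n(b)`, `H_n = (n + 1) ψ + ω_n`, yields an eigenvalue
in `(a, b]` by the intermediate value theorem. -/
lemma count_local (h : LocallyQuantized lam ψ L M) (hc : ContinuousOn ψ (Set.Ioo L M))
    (hm : StrictMonoOn ψ (Set.Ioo L M)) {l₀ : ℝ} (hl₀ : l₀ ∈ Set.Ioo L M) :
    ∃ ε > 0, ∃ C : ℝ, ∀ a ∈ Metric.ball l₀ ε, ∀ b ∈ Metric.ball l₀ ε, a ≤ b → ∀ n : ℕ,
      n * ((ψ b - ψ a) / Real.pi) - C ≤ countIoc lam n a b := by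
  obtain ⟨ε, hε, C, hC, hsub, H⟩ := h l₀ hl₀
  refine ⟨ε, hε, C * (2 * ε) / Real.pi + 1, fun a ha b hb hab n => ?_⟩
  obtain ⟨ω, hω, hx, -⟩ := H n
  have hpi := Real.pi_pos
  have hIcc : Set.Icc a b ⊆ Metric.ball l₀ ε := by
    rw [Real.ball_eq_Ioo] at ha hb ⊢
    exact fun y hy => ⟨ha.1.trans_le hy.1, hy.2.trans_lt hb.2⟩
  set F : ℝ → ℝ := fun x => ((n : ℝ) + 1) * ψ x + ω x with hF
  have hFc : ContinuousOn F (Set.Icc a b) :=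
    (continuousOn_const.mul (hc.mono (hIcc.trans hsub))).add
      ((continuousOn_of_abs_sub_le hω).mono hIcc)
  have hψ : ψ a ≤ ψ b := hm.monotoneOn (hsub ha) (hsub hb) hab
  have hFab : n * (ψ b - ψ a) - C * (2 * ε) ≤ F b - F a := by
    have e1 := hω a ha b hb
    have e2 : |a - b| ≤ 2 * ε := by
      rw [Metric.mem_ball, Real.dist_eq, abs_lt] at ha hb
      rw [abs_le]; constructor <;> linarith [ha.1, ha.2, hb.1, hb.2]
    have e3 := (abs_le.1 (e1.trans (mul_le_mul_of_nonneg_left e2 hC))).2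
    simp only [hF]
    linarith
  have hex : ∀ j : Finset.Ioc ⌊F a / Real.pi⌋ ⌊F b / Real.pi⌋,
      ∃ i : {i : Fin n // lam n i ∈ Set.Ioc a b}, F (lam n i) = Real.pi * (j.1 : ℤ) := by
    rintro ⟨j, hj⟩
    rw [Finset.mem_Ioc, Int.floor_lt, Int.le_floor, div_lt_iff₀ hpi, le_div_iff₀ hpi] at hj
    obtain ⟨y, hy, hyj⟩ := intermediate_value_Icc hab hFc
      (⟨by linarith [hj.1], by linarith [hj.2]⟩ : Real.pi * (j : ℝ) ∈ Set.Icc (F a) (F b))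
    obtain ⟨i, hi, rfl⟩ := (hx y (hIcc hy)).2 ⟨j, hyj⟩
    refine ⟨⟨⟨i, hi⟩, lt_of_le_of_ne hy.1 fun he => ?_, hy.2⟩, hyj⟩
    rw [← he] at hyj
    linarith [hj.1]
  choose g hg using hex
  have hginj : Function.Injective g := by
    intro j j' hjj
    have := hg j
    rw [hjj, hg j'] at this
    have := mul_left_cancel₀ hpi.ne' this
    exact Subtype.ext (by exact_mod_cast this.symm)
  have hcard := Nat.card_le_card_of_injective g hginj
  rw [Nat.card_eq_fintype_card, Fintype.card_coe, Int.card_Ioc] at hcard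
  have h1 : (⌊F b / Real.pi⌋ - ⌊F a / Real.pi⌋ : ℤ) ≤ (countIoc lam n a b : ℤ) :=
    (Int.self_le_toNat _).trans (by exact_mod_cast hcard)
  have h2 : ((⌊F b / Real.pi⌋ : ℝ) - ⌊F a / Real.pi⌋) ≤ countIoc lam n a b := by exact_mod_cast h1
  have h3 := Int.lt_floor_add_one (F b / Real.pi)
  have h4 := Int.floor_le (F a / Real.pi)
  have h5 : (n * (ψ b - ψ a) - C * (2 * ε)) / Real.pi ≤ (F b - F a) / Real.pi := by gcongr
  rw [sub_div, sub_div, mul_div_assoc] at h5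
  linarith

lemma count_global (h : LocallyQuantized lam ψ L M) (hc : ContinuousOn ψ (Set.Ioo L M))
    (hm : StrictMonoOn ψ (Set.Ioo L M)) {a b : ℝ} (ha : a ∈ Set.Ioo L M) (hb : b ∈ Set.Ioo L M)
    (hab : a ≤ b) :
    ∃ C : ℝ, ∀ n : ℕ, n * ((ψ b - ψ a) / Real.pi) - C ≤ countIoc lam n a b := by
  choose! ε hε C hC using fun l₀ (hl₀ : l₀ ∈ Set.Ioo L M) => h.count_local hc hm hl₀
  have hmem : ∀ y : Set.Icc a b, (y : ℝ) ∈ Set.Ioo L M := fun y =>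
    ⟨ha.1.trans_le y.2.1, y.2.2.trans_lt hb.2⟩
  obtain ⟨t, ht0, htm, ⟨m, hm'⟩, ht⟩ := exists_monotone_Icc_subset_open_cover_Icc hab
    (c := fun y : Set.Icc a b => Subtype.val ⁻¹' Metric.ball (y : ℝ) (ε y))
    (fun y => Metric.isOpen_ball.preimage continuous_subtype_val)
    (fun y _ => Set.mem_iUnion.2 ⟨y, Metric.mem_ball_self (hε _ (hmem y))⟩)
  have key : ∀ k : ℕ, ∃ C : ℝ, ∀ n : ℕ,
      n * ((ψ (t k) - ψ a) / Real.pi) - C ≤ countIoc lam n a (t k) := by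
    intro k
    induction k with
    | zero => exact ⟨0, fun n => by simp [ht0]⟩
    | succ k ih =>
      obtain ⟨C₁, h₁⟩ := ih
      obtain ⟨y, hy⟩ := ht k
      have hle : t k ≤ t (k + 1) := htm (Nat.le_succ k)
      refine ⟨C₁ + C y, fun n => ?_⟩
      have e1 := h₁ n
      have e2 := hC y (hmem y) (t k) (hy ⟨le_rfl, hle⟩) (t (k + 1)) (hy ⟨hle, le_rfl⟩) hle n
      rw [countIoc_eq_add lam n (t k).2.1 (show (t k : ℝ) ≤ t (k + 1) from hle)]
      push_cast
      calc _ = (n * ((ψ (t k) - ψ a) / Real.pi) - C₁) +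
            (n * ((ψ (t (k + 1)) - ψ (t k)) / Real.pi) - C y) := by ring
        _ ≤ _ := add_le_add e1 e2
  obtain ⟨C', h'⟩ := key m
  rw [hm' m le_rfl] at h'
  exact ⟨C', h'⟩

/-- Eigenvalues with index `k ∼ x n` converge to the level `l` with `ψ l = π x`. -/
lemma tendsto (h : LocallyQuantized lam ψ L M) (hc : ContinuousOn ψ (Set.Ioo L M))
    (hm : StrictMonoOn ψ (Set.Ioo L M))
    (hlow : ∀ ε > 0, ∃ a ∈ Set.Ioo L M, ∀ l ∈ Set.Ioo L a, ψ l < ε)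
    (hhigh : ∀ ε > 0, ∃ a ∈ Set.Ioo L M, ∀ l ∈ Set.Ioo a M, Real.pi - ε < ψ l)
    (hmono : ∀ n : ℕ, ∀ i j : ℕ, i ≤ j → j < n → lam n i ≤ lam n j)
    {x l : ℝ} (hl : l ∈ Set.Ioo L M) (hlx : ψ l = Real.pi * x) {k : ℕ → ℕ}
    (hkn : ∀ᶠ n in atTop, k n < n)
    (hk : Tendsto (fun n : ℕ => (k n : ℝ) / n) atTop (𝓝 x)) :
    Tendsto (fun n => lam n (k n)) atTop (𝓝 l) := by
  have hpi := Real.pi_pos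
  have hC : ∀ C : ℝ, Tendsto (fun n : ℕ => C / (n : ℝ)) atTop (𝓝 0) :=
    fun C => tendsto_const_div_atTop_nhds_zero_nat C
  refine tendsto_order.2 ⟨fun a' ha' => ?_, fun b' hb' => ?_⟩
  · obtain ⟨a, ha1, ha2⟩ := exists_between (max_lt ha' hl.1)
    have haI : a ∈ Set.Ioo L M := ⟨(le_max_right _ _).trans_lt ha1, ha2.trans hl.2⟩
    have hδ : 0 < ψ l - ψ a := sub_pos.2 (hm haI hl ha2)
    obtain ⟨b₀, hb₀, hb₁⟩ := hhigh ((ψ l - ψ a) / 2) (by linarith)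
    obtain ⟨b, hb2, hb3⟩ := exists_between (max_lt hb₀.2 hl.2)
    have hlb : l < b := (le_max_right _ _).trans_lt hb2
    have hbI : b ∈ Set.Ioo L M := ⟨hl.1.trans hlb, hb3⟩
    have hb4 := hb₁ b ⟨(le_max_left _ _).trans_lt hb2, hb3⟩
    obtain ⟨C, hcount⟩ := h.count_global hc hm haI hbI (ha2.trans hlb).le
    have hlim : Tendsto (fun n : ℕ => (k n : ℝ) / n - C / n) atTop (𝓝 (x - 0)) :=
      hk.sub (hC C)
    have hev := hlim.eventually (lt_mem_nhds (show x - (ψ l - ψ a) / 2 / Real.pi < x - 0 by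
      have : 0 < (ψ l - ψ a) / 2 / Real.pi := by positivity
      linarith))
    filter_upwards [hev, hkn, eventually_gt_atTop 0] with n hn hkn hn0
    refine ((le_max_left _ _).trans_lt ha1).trans ?_
    by_contra hcon
    push Not at hcon
    have e1 : countIoc lam n a b + k n ≤ n := countIoc_le_of_ge hkn.le fun i hi hiI => by
      by_contra hlt
      exact absurd (hiI.1.trans_le (hmono n i (k n) (by omega) hkn)) (not_lt.2 hcon)
    have e2 : (countIoc lam n a b : ℝ) + k n ≤ n := by exact_mod_cast e1
    have e3 := hcount n
    have hn0' : (0 : ℝ) < n := by exact_mod_cast hn0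
    rw [← sub_div, lt_div_iff₀ hn0'] at hn
    have e4 : (1 : ℝ) - x + (ψ l - ψ a) / 2 / Real.pi < (ψ b - ψ a) / Real.pi := by
      rw [lt_div_iff₀ hpi, add_mul, div_mul_cancel₀ _ hpi.ne']
      linarith
    nlinarith [mul_lt_mul_of_pos_left e4 hn0']
  · obtain ⟨b, hb1, hb2⟩ := exists_between (lt_min hb' hl.2)
    have hbI : b ∈ Set.Ioo L M := ⟨hl.1.trans hb1, hb2.trans_le (min_le_right _ _)⟩
    have hδ : 0 < ψ b - ψ l := sub_pos.2 (hm hl hbI hb1)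
    obtain ⟨a₀, ha₀, ha₁⟩ := hlow ((ψ b - ψ l) / 2) (by linarith)
    obtain ⟨a, ha2, ha3⟩ := exists_between (lt_min ha₀.1 hl.1)
    have hal : a < l := ha3.trans_le (min_le_right _ _)
    have haI : a ∈ Set.Ioo L M := ⟨ha2, hal.trans hl.2⟩
    have ha4 := ha₁ a ⟨ha2, ha3.trans_le (min_le_left _ _)⟩
    obtain ⟨C, hcount⟩ := h.count_global hc hm haI hbI (hal.trans hb1).le
    have hlim : Tendsto (fun n : ℕ => (k n : ℝ) / n + C / n) atTop (𝓝 (x + 0)) :=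
      hk.add (hC C)
    have hev := hlim.eventually (gt_mem_nhds (show x + 0 < x + (ψ b - ψ l) / 2 / Real.pi by
      have : 0 < (ψ b - ψ l) / 2 / Real.pi := by positivity
      linarith))
    filter_upwards [hev, hkn, eventually_gt_atTop 0] with n hn hkn hn0
    refine lt_of_le_of_lt ?_ (hb2.trans_le (min_le_left _ _))
    by_contra hcon
    push Not at hcon
    have e1 : countIoc lam n a b ≤ k n := countIoc_le_of_lt fun i hi hiI => by
      by_contra hlt
      exact absurd (hcon.trans_le (hmono n (k n) i (by omega) hi)) (not_lt.2 hiI.2)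
    have e2 : (countIoc lam n a b : ℝ) ≤ k n := by exact_mod_cast e1
    have e3 := hcount n
    have hn0' : (0 : ℝ) < n := by exact_mod_cast hn0
    rw [← add_div, div_lt_iff₀ hn0'] at hn
    have e4 : x + (ψ b - ψ l) / 2 / Real.pi < (ψ b - ψ a) / Real.pi := by
      rw [lt_div_iff₀ hpi, add_mul, div_mul_cancel₀ _ hpi.ne']
      linarith
    nlinarith [mul_lt_mul_of_pos_left e4 hn0']

/-! ### Gaps between consecutive eigenvalues -/

/-- Two neighbouring eigenvalues `p < q` close to `l` satisfy `H_n(q) - H_n(p) = π`, where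
`H_n = (n + 1) ψ + ω_n`: the function `H_n` is increasing near `l` for large `n`, and a value
`π j` taken strictly between would be an eigenvalue strictly between `p` and `q`. The differences
of `ω_n` are absorbed in the error term. -/
lemma abs_gap_sub_pi_le (h : LocallyQuantized lam ψ L M) (hc : ContinuousOn ψ (Set.Ioo L M))
    (hmono : ∀ n : ℕ, ∀ i j : ℕ, i ≤ j → j < n → lam n i ≤ lam n j)
    {l d : ℝ} (hl : l ∈ Set.Ioo L M) (hd : 0 < d) (hψ : HasStrictDerivAt ψ d l) {k : ℕ → ℕ}
    (hkn : ∀ᶠ n in atTop, k n + 1 < n)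
    (hp : Tendsto (fun n => lam n (k n)) atTop (𝓝 l))
    (hq : Tendsto (fun n => lam n (k n + 1)) atTop (𝓝 l)) :
    ∃ C : ℝ, ∀ᶠ n : ℕ in atTop, lam n (k n) < lam n (k n + 1) ∧
      |((n : ℝ) + 1) * (ψ (lam n (k n + 1)) - ψ (lam n (k n))) - Real.pi| ≤
        C * |lam n (k n + 1) - lam n (k n)| := by
  obtain ⟨ε, hε, C, hC, hsub, H⟩ := h l hl
  have hpi := Real.pi_pos
  -- lower bound `ψ y - ψ x ≥ (d / 2) (y - x)` near `l`
  have hψo : (fun p : ℝ × ℝ => ψ p.1 - ψ p.2 - d * (p.1 - p.2)) =o[𝓝 (l, l)]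
      fun p => p.1 - p.2 := by
    simpa [mul_comm] using hψ.hasStrictFDerivAt.isLittleO
  have hev := hψo.def (half_pos hd)
  rw [Metric.eventually_nhds_iff] at hev
  obtain ⟨δ, hδ, hlin⟩ := hev
  set r := min ε δ with hr
  have hr0 : 0 < r := lt_min hε hδ
  have hgrow : ∀ x ∈ Metric.ball l r, ∀ y ∈ Metric.ball l r, x < y →
      d / 2 * (y - x) ≤ ψ y - ψ x := by
    intro x hx y hy hxy
    have hx' : dist x l < δ := (Metric.mem_ball.1 hx).trans_le (min_le_right _ _)
    have hy' : dist y l < δ := (Metric.mem_ball.1 hy).trans_le (min_le_right _ _)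
    have e := hlin (y := (y, x)) (max_lt hy' hx')
    simp only [Real.norm_eq_abs] at e
    rw [abs_of_pos (sub_pos.2 hxy)] at e
    have := (abs_le.1 e).1
    linarith
  have hbig : ∀ᶠ n : ℕ in atTop, C < ((n : ℝ) + 1) * (d / 2) := by
    have : Tendsto (fun n : ℕ => ((n : ℝ) + 1) * (d / 2)) atTop atTop :=
      (tendsto_atTop_add_const_right _ _ tendsto_natCast_atTop_atTop).atTop_mul_const (half_pos hd)
    exact this.eventually_gt_atTop C
  refine ⟨C, ?_⟩
  filter_upwards [hbig, hkn, hp.eventually (Metric.ball_mem_nhds l hr0),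
    hq.eventually (Metric.ball_mem_nhds l hr0)] with n hn hk hpr hqr
  rw [← Metric.mem_ball] at hpr hqr
  obtain ⟨ω, hω, hx, hinj⟩ := H n
  have hrε : Metric.ball l r ⊆ Metric.ball l ε := Metric.ball_subset_ball (min_le_left _ _)
  have hlt : lam n (k n) < lam n (k n + 1) := by
    refine lt_of_le_of_ne (hmono n _ _ (Nat.le_succ _) hk) fun he => ?_
    have := hinj (k n) (by omega) (k n + 1) hk he (hrε hpr)
    omega
  have hIcc : Set.Icc (lam n (k n)) (lam n (k n + 1)) ⊆ Metric.ball l r := by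
    rw [Real.ball_eq_Ioo] at hpr hqr ⊢
    exact fun y hy => ⟨hpr.1.trans_le hy.1, hy.2.trans_lt hqr.2⟩
  set F : ℝ → ℝ := fun x => ((n : ℝ) + 1) * ψ x + ω x with hF
  have hFc : ContinuousOn F (Set.Icc (lam n (k n)) (lam n (k n + 1))) :=
    (continuousOn_const.mul (hc.mono (hIcc.trans (hrε.trans hsub)))).add
      ((continuousOn_of_abs_sub_le hω).mono (hIcc.trans hrε))
  have hFm : F (lam n (k n)) < F (lam n (k n + 1)) := by
    have e1 := hgrow _ hpr _ hqr hlt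
    have e2 := (abs_le.1 (hω _ (hrε hqr) _ (hrε hpr))).1
    rw [abs_of_pos (sub_pos.2 hlt)] at e2
    have hn1 : (0 : ℝ) < (n : ℝ) + 1 := by positivity
    have e3 := mul_le_mul_of_nonneg_left e1 hn1.le
    have e4 := mul_lt_mul_of_pos_right hn (sub_pos.2 hlt)
    simp only [hF]
    nlinarith
  obtain ⟨j, hj⟩ := (hx _ (hrε hpr)).1 ⟨k n, by omega, rfl⟩
  obtain ⟨j', hj'⟩ := (hx _ (hrε hqr)).1 ⟨k n + 1, hk, rfl⟩
  change F _ = _ at hj hj'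
  have hjj : j < j' := by
    rw [hj, hj'] at hFm
    exact_mod_cast lt_of_mul_lt_mul_left hFm hpi.le
  have hj1 : j' = j + 1 := by
    by_contra hne
    have hjj2 : j + 1 < j' := by omega
    have c1 : Real.pi * (j : ℝ) < Real.pi * ((j + 1 : ℤ) : ℝ) :=
      mul_lt_mul_of_pos_left (by exact_mod_cast Int.lt_succ j) hpi
    have c2 : Real.pi * ((j + 1 : ℤ) : ℝ) < Real.pi * (j' : ℝ) :=
      mul_lt_mul_of_pos_left (by exact_mod_cast hjj2) hpi
    obtain ⟨y, hy, hyj⟩ := intermediate_value_Ioo hlt.le hFc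
      (⟨by rw [hj]; exact c1, by rw [hj']; exact c2⟩ :
        Real.pi * ((j + 1 : ℤ) : ℝ) ∈ Set.Ioo (F (lam n (k n))) (F (lam n (k n + 1))))
    obtain ⟨i, hi, rfl⟩ := (hx y (hrε (hIcc (Set.Ioo_subset_Icc_self hy)))).2 ⟨j + 1, hyj⟩
    rcases Nat.lt_or_ge (k n) i with h1 | h1
    · exact absurd hy.2 (not_lt.2 (hmono n _ _ h1 hi))
    · exact absurd hy.1 (not_lt.2 (hmono n _ _ h1 (by omega)))
  refine ⟨hlt, ?_⟩
  have e : ((n : ℝ) + 1) * (ψ (lam n (k n + 1)) - ψ (lam n (k n))) - Real.pi =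
      -(ω (lam n (k n + 1)) - ω (lam n (k n))) := by
    rw [hj1] at hj'
    simp only [hF] at hj hj'
    push_cast at hj'
    linarith
  rw [e, abs_neg]
  exact hω _ (hrε hqr) _ (hrε hpr)

lemma tendsto_gap (h : LocallyQuantized lam ψ L M) (hc : ContinuousOn ψ (Set.Ioo L M))
    (hmono : ∀ n : ℕ, ∀ i j : ℕ, i ≤ j → j < n → lam n i ≤ lam n j)
    {l d : ℝ} (hl : l ∈ Set.Ioo L M) (hd : 0 < d) (hψ : HasStrictDerivAt ψ d l) {k : ℕ → ℕ}
    (hkn : ∀ᶠ n in atTop, k n + 1 < n)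
    (hp : Tendsto (fun n => lam n (k n)) atTop (𝓝 l))
    (hq : Tendsto (fun n => lam n (k n + 1)) atTop (𝓝 l)) :
    Tendsto (fun n : ℕ => (n : ℝ) * (lam n (k n + 1) - lam n (k n) - Real.pi / (d * ((n : ℝ) + 1))))
      atTop (𝓝 0) := by
  obtain ⟨C, hgap⟩ := h.abs_gap_sub_pi_le hc hmono hl hd hψ hkn hp hq
  have hΔ : Tendsto (fun n => lam n (k n + 1) - lam n (k n)) atTop (𝓝 0) := by
    simpa using hq.sub hp
  have h1 : Tendsto (fun n : ℕ => ((n : ℝ) + 1) * (ψ (lam n (k n + 1)) - ψ (lam n (k n))))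
      atTop (𝓝 Real.pi) := by
    rw [tendsto_iff_norm_sub_tendsto_zero]
    have hz : Tendsto (fun n => C * |lam n (k n + 1) - lam n (k n)|) atTop (𝓝 0) := by
      simpa using hΔ.abs.const_mul C
    exact squeeze_zero' (Eventually.of_forall fun n => norm_nonneg _) (hgap.mono fun n hn => hn.2) hz
  have h2 : Tendsto (fun n : ℕ => (ψ (lam n (k n + 1)) - ψ (lam n (k n))) /
      (lam n (k n + 1) - lam n (k n))) atTop (𝓝 d) := by
    have hψo : (fun p : ℝ × ℝ => ψ p.1 - ψ p.2 - d * (p.1 - p.2)) =o[𝓝 (l, l)]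
        fun p => p.1 - p.2 := by
      simpa [mul_comm] using hψ.hasStrictFDerivAt.isLittleO
    have e := (hψo.comp_tendsto
      (hq.prodMk_nhds hp)).tendsto_div_nhds_zero
    have e' := e.add_const d
    rw [zero_add] at e'
    refine e'.congr' (hgap.mono fun n hn => ?_)
    have hne : lam n (k n + 1) - lam n (k n) ≠ 0 := (sub_pos.2 hn.1).ne'
    simp only [Function.comp_apply]
    field_simp
    ring
  have h3 : Tendsto (fun n : ℕ => ((n : ℝ) + 1) * (lam n (k n + 1) - lam n (k n)))
      atTop (𝓝 (Real.pi / d)) := by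
    refine (h1.div h2 hd.ne').congr' ((hgap.and (h2.eventually_ne hd.ne')).mono fun n hn => ?_)
    have hne : lam n (k n + 1) - lam n (k n) ≠ 0 := (sub_pos.2 hn.1.1).ne'
    have hz : ψ (lam n (k n + 1)) - ψ (lam n (k n)) ≠ 0 := fun h0 => hn.2 (by rw [h0, zero_div])
    rw [Pi.div_apply]
    field_simp
  have h4 : Tendsto (fun n : ℕ => (n : ℝ) / ((n : ℝ) + 1)) atTop (𝓝 1) :=
    tendsto_natCast_div_add_atTop 1
  have h5 := h4.mul (h3.sub_const (Real.pi / d))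
  rw [sub_self, mul_zero] at h5
  refine h5.congr fun n => ?_
  have hn1 : (n : ℝ) + 1 ≠ 0 := by positivity
  field_simp

end LocallyQuantized

/-! ### The eigenvalue asymptotics -/

/-- **Eigenvalue asymptotics for Toeplitz matrices with unimodal trigonometric
polynomial symbols (Bogoya–Grudsky–Maximenko).** Let `f` be a real-valued trigonometric
polynomial which is unimodal on `[0, 2π)` with maximum at `θ₀` and nondegenerate
critical points at `0` and `θ₀`; let `θ₁(λ), θ₂(λ)` be the two preimages of
`λ ∈ (L, M) = (f(1), f(e^{iθ₀}))` and `ψ(λ) = (θ₁(λ) − θ₂(λ))/2 + π`. If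
`λ₁⁽ⁿ⁾ ≤ ⋯ ≤ λₙ⁽ⁿ⁾` are the eigenvalues of the Hermitian Toeplitz matrix `T_n(f)`,
then for `x ∈ (0,1)`: there is a unique `λ_x ∈ (L, M)` with `ψ(λ_x) = πx`; if
`k(n)/n → x` then `λ_{k(n)}⁽ⁿ⁾ → λ_x`; and if `|k(n)/n − x| = O(1/n)` then
`λ_{k+1}⁽ⁿ⁾ − λ_k⁽ⁿ⁾ = π/(ψ′(λ_x)(n+1)) + o(1/n)`. Moreover `L < M` and `ψ` is
differentiable on `(L, M)`. -/
theorem toeplitz_eigenvalue_asymptotics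
    (f : ℝ → ℝ)
    (htrig : ∃ (N : ℕ) (c : ℤ → ℂ), (∀ ℓ : ℤ, c (-ℓ) = (starRingEnd ℂ) (c ℓ)) ∧
      ∀ θ : ℝ, (f θ : ℂ) =
        ∑ ℓ ∈ Finset.Icc (-(N : ℤ)) (N : ℤ),
          c ℓ * Complex.exp (Complex.I * (ℓ : ℂ) * (θ : ℂ)))
    (θ₀ : ℝ) (hθ₀ : θ₀ ∈ Set.Ioo 0 (2 * Real.pi))
    (hup : ∀ θ ∈ Set.Ioo 0 θ₀, 0 < deriv f θ)
    (hdown : ∀ θ ∈ Set.Ioo θ₀ (2 * Real.pi), deriv f θ < 0)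
    (hnd0 : deriv (deriv f) 0 ≠ 0) (hndθ₀ : deriv (deriv f) θ₀ ≠ 0)
    (θ₁ θ₂ : ℝ → ℝ)
    (hθ₁ : ∀ lam ∈ Set.Ioo (f 0) (f θ₀), θ₁ lam ∈ Set.Ioo 0 θ₀ ∧ f (θ₁ lam) = lam ∧
      ∀ θ ∈ Set.Ioo 0 θ₀, f θ = lam → θ = θ₁ lam)
    (hθ₂ : ∀ lam ∈ Set.Ioo (f 0) (f θ₀), θ₂ lam ∈ Set.Ioo θ₀ (2 * Real.pi) ∧
      f (θ₂ lam) = lam ∧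
      ∀ θ ∈ Set.Ioo θ₀ (2 * Real.pi), f θ = lam → θ = θ₂ lam)
    (hH : ∀ n : ℕ, (toeplitzMatrix (fun θ => (f θ : ℂ)) n).IsHermitian)
    (lam : (n : ℕ) → ℕ → ℝ)
    (hperm : ∀ n : ℕ, ∃ σ : Equiv.Perm (Fin n),
      ∀ i : Fin n, lam n (i : ℕ) = (hH n).eigenvalues (σ i))
    (hmono : ∀ n : ℕ, ∀ i j : ℕ, i ≤ j → j < n → lam n i ≤ lam n j) :
    f 0 < f θ₀ ∧
    DifferentiableOn ℝ (fun l => (θ₁ l - θ₂ l) / 2 + Real.pi)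
      (Set.Ioo (f 0) (f θ₀)) ∧
    ∀ x ∈ Set.Ioo (0 : ℝ) 1,
      (∃! lamx, lamx ∈ Set.Ioo (f 0) (f θ₀) ∧
        (θ₁ lamx - θ₂ lamx) / 2 + Real.pi = Real.pi * x) ∧
      ∀ lamx, lamx ∈ Set.Ioo (f 0) (f θ₀) →
        (θ₁ lamx - θ₂ lamx) / 2 + Real.pi = Real.pi * x →
        (∀ k : ℕ → ℕ,
          Tendsto (fun n : ℕ => (k n : ℝ) / n) atTop (𝓝 x) →
          Tendsto (fun n : ℕ => lam n (k n)) atTop (𝓝 lamx)) ∧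
        (∀ k : ℕ → ℕ, ∀ C : ℝ,
          (∀ n : ℕ, 1 ≤ n → |(k n : ℝ) / n - x| ≤ C / n) →
          Tendsto (fun n : ℕ =>
              (n : ℝ) * (lam n (k n + 1) - lam n (k n) -
                Real.pi /
                  (deriv (fun l => (θ₁ l - θ₂ l) / 2 + Real.pi) lamx * ((n : ℝ) + 1))))
            atTop (𝓝 0)) := by
  obtain ⟨N, c, -, htr⟩ := htrig
  have h : Unimodal f N c θ₀ θ₁ θ₂ := ⟨htr, hθ₀, hup, hdown, hθ₁, hθ₂⟩
  have hpi := Real.pi_pos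
  have hQ := h.locallyQuantized hH hperm
  have hc : ContinuousOn (psiFn θ₁ θ₂) (Set.Ioo (f 0) (f θ₀)) := fun l hl =>
    (h.contDiffAt_psi hl).continuousAt.continuousWithinAt
  refine ⟨h.lt, fun l hl => ((h.contDiffAt_psi hl).differentiableAt
    one_ne_zero).differentiableWithinAt, fun x hx => ⟨?_, fun l hl hlx => ?_⟩⟩
  · obtain ⟨l, hl, hlx⟩ := h.exists_psi_eq (y := Real.pi * x)
      ⟨mul_pos hpi hx.1, by nlinarith [hx.2]⟩
    exact ⟨l, ⟨hl, hlx⟩, fun l' hl' =>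
      h.strictMonoOn_psi.injOn hl'.1 hl (Eq.trans hl'.2 hlx.symm)⟩
  · have hone : Tendsto (fun n : ℕ => (1 : ℝ) / n) atTop (𝓝 0) :=
      tendsto_const_div_atTop_nhds_zero_nat 1
    have hev : ∀ k : ℕ → ℕ, Tendsto (fun n : ℕ => (k n : ℝ) / n) atTop (𝓝 x) →
        ∀ᶠ n in atTop, k n < n := by
      intro k hk
      filter_upwards [hk.eventually (gt_mem_nhds hx.2), eventually_gt_atTop 0] with n hn hn0
      rw [div_lt_one (by exact_mod_cast hn0)] at hn
      exact_mod_cast hn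
    have hlim : ∀ k : ℕ → ℕ, Tendsto (fun n : ℕ => (k n : ℝ) / n) atTop (𝓝 x) →
        Tendsto (fun n : ℕ => lam n (k n)) atTop (𝓝 l) := fun k hk =>
      hQ.tendsto hc h.strictMonoOn_psi (fun ε hε => h.exists_psi_lt hε)
        (fun ε hε => h.exists_lt_psi hε) hmono hl hlx (hev k hk) hk
    refine ⟨hlim, fun k C hkC => ?_⟩
    have hk : Tendsto (fun n : ℕ => (k n : ℝ) / n) atTop (𝓝 x) := by
      rw [tendsto_iff_norm_sub_tendsto_zero]
      exact squeeze_zero' (Eventually.of_forall fun n => norm_nonneg _)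
        ((eventually_ge_atTop 1).mono hkC) (tendsto_const_div_atTop_nhds_zero_nat C)
    have hk1 : Tendsto (fun n : ℕ => ((k n + 1 : ℕ) : ℝ) / n) atTop (𝓝 x) := by
      have := hk.add hone
      rw [add_zero] at this
      refine this.congr fun n => ?_
      rw [Nat.cast_add, Nat.cast_one, add_div]
    exact hQ.tendsto_gap hc hmono hl (h.deriv_psi_pos hl)
      ((h.contDiffAt_psi hl).hasStrictDerivAt one_ne_zero) (hev (fun n => k n + 1) hk1)
      (hlim k hk) (hlim (fun n => k n + 1) hk1)
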